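/- arXiv:math/9207205 — 9 statements merged into one kernel-verified Lean document; each statement's English description precedes it below -/
import Mathlib

section
/- Let (A,B) be a disjoint (θ,θ) pair which is nice. Then (A,B) is a gap, i.e., it cannot be split: there is no set c ⊆ ω such that a_ξ \ c is finite for every ξ < θ and c ∩ b_ξ is finite for every ξ < θ. -/
open Cardinal Set

/-- `a(x) = ⋂ ξ ∈ x, a ξ`  (so `a(∅) = ω`). -/
def inters (a : Ordinal.{0} → Set ℕ) (x : Set Ordinal) : Set ℕ := ⋂ ξ ∈ x, a ξ

/-- `(A,B)`, given by `a ξ` and `b ξ` for `ξ < θ`, is a `(θ,θ)` pair: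
`a ξ ∩ b η` is finite for all `ξ, η < θ`. -/
def IsPair (θ : Cardinal.{0}) (a b : Ordinal.{0} → Set ℕ) : Prop :=
  ∀ ξ < θ.ord, ∀ η < θ.ord, (a ξ ∩ b η).Finite

/-- `x` is a family of θ-many pairwise disjoint finite subsets of `θ`. -/
def DisjFinFam (θ : Cardinal.{0}) (x : Ordinal.{0} → Set Ordinal.{0}) : Prop :=
  (∀ i < θ.ord, (x i).Finite ∧ x i ⊆ Set.Iio θ.ord) ∧
  ∀ i < θ.ord, ∀ j < θ.ord, i ≠ j → Disjoint (x i) (x j)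

/-- The pair `(A,B)` is nice: for every family of θ-many pairwise disjoint finite
subsets of `θ` there are `i, j < θ` with `a(x_i) ∩ b(x_j) ≠ ∅`. -/
def IsNice (θ : Cardinal.{0}) (a b : Ordinal.{0} → Set ℕ) : Prop :=
  ∀ x : Ordinal.{0} → Set Ordinal.{0}, DisjFinFam θ x →
    ∃ i < θ.ord, ∃ j < θ.ord, (inters a (x i) ∩ inters b (x j)).Nonempty

/-- a nice disjoint `(θ,θ)` pair is a gap, i.e. it cannot be split:
there is no `c ⊆ ω` with `a ξ \ c` finite and `c ∩ b ξ` finite for all `ξ < θ`. -/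
theorem statement0 (θ : Cardinal.{0}) (a b : Ordinal.{0} → Set ℕ)
    (hκ : ℵ₀ < θ.ord.cof) (hsing : θ.ord.cof < θ)
    (hpair : IsPair θ a b)
    (hdisj : ∀ ξ < θ.ord, a ξ ∩ b ξ = ∅)
    (hnice : IsNice θ a b) :
    ¬ ∃ c : Set ℕ, ∀ ξ < θ.ord, (a ξ \ c).Finite ∧ (c ∩ b ξ).Finite := by
  rintro ⟨c, hc⟩
  let e : Set.Iio θ.ord ≃ θ.ord.ToType := Ordinal.ToType.mk.toEquiv
  let v : θ.ord.ToType → Ordinal.{0} := fun t => (e.symm t : Ordinal)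
  have hv : ∀ t, v t < θ.ord := fun t => (e.symm t).2
  have hvi : Function.Injective v := fun s t h => e.symm.injective (Subtype.ext h)
  let f : θ.ord.ToType → Finset ℕ × Finset ℕ := fun t =>
    ((hc (v t) (hv t)).1.toFinset, (hc (v t) (hv t)).2.toFinset)
  have hcard : #θ.ord.ToType = θ := Cardinal.mk_ord_toType θ
  obtain ⟨p, hp⟩ := Cardinal.infinite_pigeonhole f
    (by rw [hcard]; exact (hκ.trans hsing).le)
    (by rw [hcard]; exact lt_of_le_of_lt Cardinal.mk_le_aleph0 hκ)
  obtain ⟨g⟩ := Cardinal.eq.1 hp.symm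
  classical
  let x : Ordinal.{0} → Set Ordinal.{0} := fun i =>
    if h : i < θ.ord then {v (g (e ⟨i, h⟩))} else ∅
  have hx : ∀ i (h : i < θ.ord), x i = {v (g (e ⟨i, h⟩))} := fun i h => dif_pos h
  obtain ⟨i, hi, j, hj, k, hk1, hk2⟩ := hnice x (by
    refine ⟨fun i hi => ?_, fun i hi j hj hij => ?_⟩
    · rw [hx i hi]
      exact ⟨Set.finite_singleton _, Set.singleton_subset_iff.2 (hv _)⟩
    · rw [hx i hi, hx j hj, Set.disjoint_singleton]
      intro h
      have h1 := e.injective (g.injective (Subtype.ext (hvi h)))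
      exact hij (congrArg Subtype.val h1))
  rw [hx i hi] at hk1
  rw [hx j hj] at hk2
  simp only [inters, Set.mem_singleton_iff, Set.iInter_iInter_eq_left] at hk1 hk2
  generalize g (e ⟨i, hi⟩) = s at hk1
  generalize g (e ⟨j, hj⟩) = t at hk2
  have hst : f s = f t := (show f s = p from s.2).trans (show f t = p from t.2).symm
  obtain ⟨h1, h2⟩ := Prod.ext_iff.1 hst
  have h1 := Set.Finite.toFinset_inj.1 h1
  have h2 := Set.Finite.toFinset_inj.1 h2
  by_cases hkc : k ∈ c
  · have : k ∈ c ∩ b (v s) := h2 ▸ ⟨hkc, hk2⟩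
    have h3 : k ∈ a (v s) ∩ b (v s) := ⟨hk1, this.2⟩
    rw [hdisj _ (hv _)] at h3
    exact h3
  · have : k ∈ a (v t) \ c := h1 ▸ ⟨hk1, hkc⟩
    have h3 : k ∈ a (v t) ∩ b (v t) := ⟨this.1, hk2⟩
    rw [hdisj _ (hv _)] at h3
    exact h3
end

section
/- If (A,B) is a disjoint (θ,θ) pair that is locally split, then the partial order S(A,B) is c.c.c.: every set of pairwise incompatible elements of S(A,B) is countable. -/
open Cardinal Set

/-- The partial order `S(A,B)`: finite partial functions from `θ` to `ω`
(coded as finite functional sets of pairs) such that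
`(a ξ \ f ξ) ∩ (b η \ f η) = ∅` for all `ξ, η` in the domain, where
`a ξ \ m` denotes `{n ∈ a ξ | m ≤ n}`.  `g` extends `f` iff `g ⊇ f`, and
`f, g` are compatible iff `f ∪ g ∈ S(A,B)`. -/
def SCond (θ : Cardinal.{0}) (a b : Ordinal.{0} → Set ℕ) : Set (Finset (Ordinal.{0} × ℕ)) :=
  {f | (∀ p ∈ f, ∀ q ∈ f, (p : Ordinal.{0} × ℕ).1 = (q : Ordinal.{0} × ℕ).1 → p = q) ∧
       (∀ p ∈ f, (p : Ordinal.{0} × ℕ).1 < θ.ord) ∧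
       ∀ p ∈ f, ∀ q ∈ f,
         {n | n ∈ a (p : Ordinal.{0} × ℕ).1 ∧ p.2 ≤ n} ∩
         {n | n ∈ b (q : Ordinal.{0} × ℕ).1 ∧ q.2 ≤ n} = ∅}

/-- The pair `(A,B)` is locally split: any subfamilies of combined size `≤ ℵ₁` split. -/
def LocallySplit (θ : Cardinal.{0}) (a b : Ordinal.{0} → Set ℕ) : Prop :=
  ∀ I J : Set Ordinal.{0}, I ⊆ Set.Iio θ.ord → J ⊆ Set.Iio θ.ord →
    #(↥(I ∪ J)) ≤ Cardinal.aleph 1 →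
    ∃ c : Set ℕ, (∀ ξ ∈ I, (a ξ \ c).Finite) ∧ ∀ η ∈ J, (c ∩ b η).Finite

/-- if `(A,B)` is a disjoint locally split `(θ,θ)` pair then `S(A,B)`
is c.c.c.: every pairwise incompatible subset is countable. -/
theorem statement1 (θ : Cardinal.{0}) (a b : Ordinal.{0} → Set ℕ)
    (hκ : ℵ₀ < θ.ord.cof) (hsing : θ.ord.cof < θ)
    (hpair : IsPair θ a b)
    (hdisj : ∀ ξ < θ.ord, a ξ ∩ b ξ = ∅)
    (hls : LocallySplit θ a b) :
    ∀ A ⊆ SCond θ a b,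
      (∀ f ∈ A, ∀ g ∈ A, f ≠ g → f ∪ g ∉ SCond θ a b) → A.Countable := by
  classical
  intro A hA hanti
  by_contra hunc
  have h1 : aleph 1 ≤ #A := by
    have h2 : ℵ₀ < #A := by
      rw [← not_le, Cardinal.le_aleph0_iff_set_countable]
      exact hunc
    rw [← Order.succ_le_iff, Cardinal.succ_aleph0] at h2
    exact h2
  obtain ⟨A', hA'A, hA'⟩ := Cardinal.le_mk_iff_exists_subset.1 h1
  set D : Set Ordinal.{0} := ⋃ f : A', (Set.image Prod.fst ((f : Finset (Ordinal.{0} × ℕ)) : Set (Ordinal.{0} × ℕ))) with hD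
  have hmem : ∀ f ∈ A', ∀ p ∈ f, p.1 ∈ D := by
    intro f hf p hp
    exact Set.mem_iUnion.2 ⟨⟨f, hf⟩, p, hp, rfl⟩
  have hDlt : D ⊆ Set.Iio θ.ord := by
    intro x hx
    obtain ⟨⟨f, hf⟩, p, hp, rfl⟩ := Set.mem_iUnion.1 hx
    exact (hA (hA'A hf)).2.1 p hp
  have hDcard : #D ≤ aleph 1 := by
    refine (Cardinal.mk_iUnion_le _).trans ?_
    rw [hA']
    refine (Cardinal.mul_le_max_of_aleph0_le_left (Cardinal.aleph0_le_aleph 1)).trans ?_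
    refine max_le le_rfl ?_
    refine ciSup_le' fun f => ?_
    have : (Set.image Prod.fst ((f : Finset (Ordinal.{0} × ℕ)) : Set (Ordinal.{0} × ℕ))).Countable :=
      (Finset.countable_toSet _).image _
    exact (Cardinal.le_aleph0_iff_set_countable.2 this).trans (Cardinal.aleph0_le_aleph 1)
  obtain ⟨c, hca, hcb⟩ := hls D D hDlt hDlt (by rw [Set.union_self]; exact hDcard)
  have hr : ∃ r : Ordinal.{0} → Set ℕ, Set.InjOn r D := by
    have h3 : Cardinal.lift.{0} #D ≤ Cardinal.lift.{1} #(Set ℕ) := by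
      rw [Cardinal.mk_set, Cardinal.mk_nat]
      simp only [Cardinal.lift_id', Cardinal.lift_two_power, Cardinal.lift_aleph0]
      refine hDcard.trans ?_
      rw [Cardinal.two_power_aleph0]
      exact Cardinal.aleph_one_le_continuum
    obtain ⟨e⟩ := Cardinal.lift_mk_le'.1 h3
    refine ⟨fun x => if h : x ∈ D then e ⟨x, h⟩ else ∅, ?_⟩
    intro x hx y hy hxy
    simp only [dif_pos hx, dif_pos hy] at hxy
    simpa using e.injective hxy
  obtain ⟨r, hr⟩ := hr
  have hN : ∀ f : A', ∃ N : ℕ, (∀ p ∈ f.1, ∀ n ≥ N, (n ∈ a p.1 → n ∈ c) ∧ (n ∈ c → n ∉ b p.1)) ∧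
      ∀ p ∈ f.1, ∀ q ∈ f.1, (∀ n < N, n ∈ r p.1 ↔ n ∈ r q.1) → p.1 = q.1 := by
    rintro ⟨f, hf⟩
    have e1 : ∀ p ∈ f, ∀ᶠ N in Filter.atTop,
        ∀ n ≥ N, (n ∈ a p.1 → n ∈ c) ∧ (n ∈ c → n ∉ b p.1) := by
      intro p hp
      obtain ⟨M, hM⟩ := ((hca _ (hmem f hf p hp)).union (hcb _ (hmem f hf p hp))).bddAbove
      filter_upwards [Filter.eventually_gt_atTop M] with N hMN n hn
      refine ⟨fun ha => ?_, fun hc hb => ?_⟩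
      · by_contra hc
        have := hM (Or.inl ⟨ha, hc⟩)
        omega
      · have := hM (Or.inr ⟨hc, hb⟩)
        omega
    have e2 : ∀ p ∈ f, ∀ q ∈ f, ∀ᶠ N : ℕ in Filter.atTop,
        (∀ n < N, n ∈ r p.1 ↔ n ∈ r q.1) → p.1 = q.1 := by
      intro p hp q hq
      by_cases h : p.1 = q.1
      · exact Filter.Eventually.of_forall fun _ _ => h
      · have hne : r p.1 ≠ r q.1 := fun h' => h (hr (hmem f hf p hp) (hmem f hf q hq) h')
        obtain ⟨n, hn⟩ : ∃ n, ¬ (n ∈ r p.1 ↔ n ∈ r q.1) := by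
          by_contra hcon
          push Not at hcon
          exact hne (Set.ext hcon)
        filter_upwards [Filter.eventually_gt_atTop n] with N hnN hall
        exact absurd (hall n hnN) hn
    have e1' := (Filter.eventually_all_finset f).2 e1
    have e2' := (Filter.eventually_all_finset f).2
      fun p hp => (Filter.eventually_all_finset f).2 (e2 p hp)
    exact (e1'.and e2').exists
  choose N hN1 hN2 using hN
  let t : ℕ → Ordinal.{0} × ℕ → Finset ℕ × ℕ × Finset ℕ × Finset ℕ := fun N p =>
    ((Finset.range N).filter (· ∈ r p.1), p.2,
      (Finset.range N).filter (· ∈ a p.1), (Finset.range N).filter (· ∈ b p.1))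
  have ht : ∀ N p q, t N p = t N q → (∀ n < N, n ∈ r p.1 ↔ n ∈ r q.1) ∧ p.2 = q.2 ∧
      (∀ n < N, n ∈ a p.1 ↔ n ∈ a q.1) ∧ (∀ n < N, n ∈ b p.1 ↔ n ∈ b q.1) := by
    intro N p q h
    simp only [t, Prod.mk.injEq, Finset.ext_iff, Finset.mem_filter, Finset.mem_range] at h
    obtain ⟨h1, h2, h3, h4⟩ := h
    refine ⟨fun n hn => ?_, h2, fun n hn => ?_, fun n hn => ?_⟩
    · simpa [hn] using h1 n
    · simpa [hn] using h3 n
    · simpa [hn] using h4 n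
  let T : A' → ℕ × Finset (Finset ℕ × ℕ × Finset ℕ × Finset ℕ) := fun f =>
    (N f, f.1.image (t (N f)))
  have hT : Function.Injective T := by
    intro f g hfg
    by_contra hne
    have hne' : f.1 ≠ g.1 := fun h => hne (Subtype.ext h)
    refine hanti f.1 (hA'A f.2) g.1 (hA'A g.2) hne' ?_
    have hNe : N f = N g := congrArg Prod.fst hfg
    have him : f.1.image (t (N f)) = g.1.image (t (N g)) := congrArg Prod.snd hfg
    have hfS := hA (hA'A f.2)
    have hgS := hA (hA'A g.2)
    have tofg : ∀ p ∈ f.1, ∃ p' ∈ g.1, t (N g) p' = t (N g) p := by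
      intro p hp
      have h := Finset.mem_image_of_mem (t (N f)) hp
      rw [him, hNe] at h
      exact Finset.mem_image.1 h
    have togf : ∀ p ∈ g.1, ∃ p' ∈ f.1, t (N g) p' = t (N g) p := by
      intro p hp
      have h := Finset.mem_image_of_mem (t (N g)) hp
      rw [← him, hNe] at h
      exact Finset.mem_image.1 h
    have hfun : ∀ p ∈ f.1, ∀ q ∈ g.1, p.1 = q.1 → p = q := by
      intro p hp q hq hpq
      obtain ⟨p', hp', htp⟩ := tofg p hp
      obtain ⟨k1, k2, -, -⟩ := ht _ _ _ htp
      have h5 : p'.1 = q.1 := hN2 g p' hp' q hq (by rw [← hpq]; exact k1)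
      have h6 : p' = q := hgS.1 p' hp' q hq h5
      exact Prod.ext hpq (by rw [← k2, h6])
    refine ⟨?_, ?_, ?_⟩
    · intro p hp q hq hpq
      rcases Finset.mem_union.1 hp with hp | hp <;> rcases Finset.mem_union.1 hq with hq | hq
      · exact hfS.1 p hp q hq hpq
      · exact hfun p hp q hq hpq
      · exact (hfun q hq p hp hpq.symm).symm
      · exact hgS.1 p hp q hq hpq
    · intro p hp
      rcases Finset.mem_union.1 hp with hp | hp
      · exact hfS.2.1 p hp
      · exact hgS.2.1 p hp
    · intro p hp q hq
      rcases Finset.mem_union.1 hp with hp | hp <;> rcases Finset.mem_union.1 hq with hq | hq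
      · exact hfS.2.2 p hp q hq
      · rw [Set.eq_empty_iff_forall_notMem]
        rintro n ⟨⟨hna, hpn⟩, hnb, hqn⟩
        by_cases hn : n < N g
        · obtain ⟨p', hp', htp⟩ := tofg p hp
          obtain ⟨-, k2, k3, -⟩ := ht _ _ _ htp
          exact Set.eq_empty_iff_forall_notMem.1 (hgS.2.2 p' hp' q hq) n
            ⟨⟨(k3 n hn).2 hna, k2.le.trans hpn⟩, hnb, hqn⟩
        · have hn' : N g ≤ n := not_lt.1 hn
          exact (hN1 g q hq n hn').2 ((hN1 f p hp n (hNe.le.trans hn')).1 hna) hnb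
      · rw [Set.eq_empty_iff_forall_notMem]
        rintro n ⟨⟨hna, hpn⟩, hnb, hqn⟩
        by_cases hn : n < N g
        · obtain ⟨q', hq', htq⟩ := tofg q hq
          obtain ⟨-, k2, -, k4⟩ := ht _ _ _ htq
          exact Set.eq_empty_iff_forall_notMem.1 (hgS.2.2 p hp q' hq') n
            ⟨⟨hna, hpn⟩, (k4 n hn).2 hnb, k2.le.trans hqn⟩
        · have hn' : N g ≤ n := not_lt.1 hn
          exact (hN1 f q hq n (hNe.le.trans hn')).2 ((hN1 g p hp n hn').1 hna) hnb
      · exact hgS.2.2 p hp q hq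
  have hcount : Countable A' := hT.countable
  have h7 : #A' ≤ ℵ₀ := Cardinal.mk_le_aleph0_iff.2 hcount
  rw [hA'] at h7
  exact absurd h7 (not_le.2 Cardinal.aleph0_lt_aleph_one)
end

section
/- Let (A,B) be a (θ,θ) pair. Then (A,B) is nice if and only if for every two families X = {x_u : u < θ} and Y = {y_v : v < θ} of pairwise disjoint finite subsets of θ, every X-sequence S = ⟨S_α : α < κ⟩ and every Y-sequence T = ⟨T_α : α < κ⟩, the product partial order Q(X,S) × Q(Y,T) is κ.c.c. -/
open Cardinal Set

/-- `S` is an `X`-sequence (relative to the fixed sequence `θseq` of cardinals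
converging to `θ`): the `S α` (for `α < κ = cof θ`) are pairwise disjoint subsets
of `θ` with `|S α| > θ_α` and `a(x_i) ∩ b(x_j) = ∅` for all `i, j ∈ S α`. -/
def XSeq (θ : Cardinal.{0}) (θseq : Ordinal.{0} → Cardinal.{0}) (a b : Ordinal.{0} → Set ℕ)
    (x S : Ordinal.{0} → Set Ordinal.{0}) : Prop :=
  (∀ α < θ.ord.cof.ord, S α ⊆ Set.Iio θ.ord) ∧
  (∀ α < θ.ord.cof.ord, ∀ β < θ.ord.cof.ord, α ≠ β → Disjoint (S α) (S β)) ∧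
  (∀ α < θ.ord.cof.ord, Cardinal.lift.{1,0} (θseq α) < #(S α)) ∧
  ∀ α < θ.ord.cof.ord, ∀ i ∈ S α, ∀ j ∈ S α, inters a (x i) ∩ inters b (x j) = ∅

/-- The partial order `Q(X,S)`: finite `F ⊆ κ` such that for all distinct
`α, β ∈ F` there are `i ∈ S α`, `j ∈ S β` with `a(x_i) ∩ b(x_j) ≠ ∅` or
`b(x_i) ∩ a(x_j) ≠ ∅`; `F, K` are compatible iff `F ∪ K ∈ Q(X,S)`. -/
def QSet (θ : Cardinal.{0}) (a b : Ordinal.{0} → Set ℕ) (x S : Ordinal.{0} → Set Ordinal.{0}) :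
    Set (Finset Ordinal.{0}) :=
  {F | (∀ α ∈ F, α < θ.ord.cof.ord) ∧
    ∀ α ∈ F, ∀ β ∈ F, α ≠ β → ∃ i ∈ S α, ∃ j ∈ S β,
      ((inters a (x i) ∩ inters b (x j)).Nonempty ∨
        (inters b (x i) ∩ inters a (x j)).Nonempty)}

/-- A poset of finite sets (with compatibility = union belongs to the poset) is
`κ.c.c.` if it has no antichain of cardinality `κ`. -/
def KCC (κ : Cardinal.{0}) (Q : Set (Finset Ordinal.{0})) : Prop :=
  ¬ ∃ A : Set (Finset Ordinal.{0}),
      A ⊆ Q ∧ (∀ F ∈ A, ∀ K ∈ A, F ≠ K → F ∪ K ∉ Q) ∧ #A = Cardinal.lift.{1,0} κ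

/-- The product of two such posets is `κ.c.c.`: there is no set of pairwise
incompatible pairs (compatibility taken coordinatewise) of cardinality `κ`. -/
def KCC2 (κ : Cardinal.{0}) (Q₁ Q₂ : Set (Finset Ordinal.{0})) : Prop :=
  ¬ ∃ A : Set (Finset Ordinal.{0} × Finset Ordinal.{0}),
      (∀ p ∈ A, p.1 ∈ Q₁ ∧ p.2 ∈ Q₂) ∧
      (∀ p ∈ A, ∀ q ∈ A, p ≠ q → ¬(p.1 ∪ q.1 ∈ Q₁ ∧ p.2 ∪ q.2 ∈ Q₂)) ∧
      #A = Cardinal.lift.{1,0} κ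

theorem aux_delta (c : Cardinal.{1}) (hc : c.IsRegular) (hc0 : ℵ₀ < c)
    (A : Set (Finset Ordinal.{0} × Finset Ordinal.{0})) (hA : #A = c) :
    ∃ B ⊆ A, ∃ R₁ R₂ : Finset Ordinal.{0}, (∀ p ∈ B, R₁ ⊆ p.1 ∧ R₂ ⊆ p.2) ∧ c ≤ #B ∧
      (∀ α, α ∉ R₁ → #{p ∈ B | α ∈ p.1} < c) ∧ (∀ α, α ∉ R₂ → #{p ∈ B | α ∈ p.2} < c) := by
  classical
  obtain ⟨n, hn⟩ : ∃ n : ℕ, c ≤ #{p ∈ A | p.1.card + p.2.card = n} := by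
    by_contra! h
    have h1 : #(⋃ n : ULift.{1} ℕ, {p ∈ A | p.1.card + p.2.card = n.down}) < c := by
      rw [Cardinal.card_iUnion_lt_iff_forall_of_isRegular hc (by simpa using hc0)]
      intro i
      exact h i.down
    refine absurd (h1.trans_le hA.ge) (not_lt.2 (Cardinal.mk_le_mk_of_subset ?_))
    intro p hp
    simp only [mem_iUnion]
    exact ⟨⟨_⟩, hp, rfl⟩
  let P : ℕ → Prop := fun m => ∃ R₁ R₂ : Finset Ordinal.{0}, R₁.card + R₂.card = m ∧
    c ≤ #{p ∈ A | p.1.card + p.2.card = n ∧ R₁ ⊆ p.1 ∧ R₂ ⊆ p.2}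
  have P0 : P 0 := ⟨∅, ∅, by simp, by simpa using hn⟩
  have Pb : ∀ m, P m → m ≤ n := by
    rintro m ⟨R₁, R₂, rfl, h⟩
    have : #{p ∈ A | p.1.card + p.2.card = n ∧ R₁ ⊆ p.1 ∧ R₂ ⊆ p.2} ≠ 0 :=
      (hc.pos.trans_le h).ne'
    rw [Cardinal.mk_ne_zero_iff] at this
    obtain ⟨p, -, hp, h1, h2⟩ := this
    have := Finset.card_le_card h1
    have := Finset.card_le_card h2
    omega
  obtain ⟨R₁, R₂, hR, hRc⟩ : P (Nat.findGreatest P n) := Nat.findGreatest_spec (Nat.zero_le n) P0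
  have hmax : ∀ m, P m → m ≤ Nat.findGreatest P n := fun m hm => Nat.le_findGreatest (Pb m hm) hm
  refine ⟨_, ?_, R₁, R₂, ?_, hRc, ?_, ?_⟩
  · exact fun p hp => hp.1
  · exact fun p hp => hp.2.2
  · intro α hα
    by_contra! h
    have := hmax _ ⟨insert α R₁, R₂, rfl, h.trans (Cardinal.mk_le_mk_of_subset ?_)⟩
    · rw [Finset.card_insert_of_notMem hα] at this
      omega
    · rintro p ⟨⟨h1, h2, h3, h4⟩, h5⟩
      exact ⟨h1, h2, Finset.insert_subset h5 h3, h4⟩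
  · intro α hα
    by_contra! h
    have := hmax _ ⟨R₁, insert α R₂, rfl, h.trans (Cardinal.mk_le_mk_of_subset ?_)⟩
    · rw [Finset.card_insert_of_notMem hα] at this
      omega
    · rintro p ⟨⟨h1, h2, h3, h4⟩, h5⟩
      exact ⟨h1, h2, h3, Finset.insert_subset h5 h4⟩

theorem aux_pick (c : Cardinal.{1}) (hc : c.IsRegular)
    (B : Set (Finset Ordinal.{0} × Finset Ordinal.{0})) (R₁ R₂ : Finset Ordinal.{0})
    (hB : c ≤ #B)
    (h1 : ∀ α, α ∉ R₁ → #{p ∈ B | α ∈ p.1} < c) (h2 : ∀ α, α ∉ R₂ → #{p ∈ B | α ∈ p.2} < c)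
    (U : Set Ordinal.{0}) (hU : #U < c) :
    ∃ p ∈ B, p ≠ (R₁, R₂) ∧ (∀ α ∈ p.1, α ∉ R₁ → α ∉ U) ∧ (∀ α ∈ p.2, α ∉ R₂ → α ∉ U) := by
  by_contra! h
  have e1 : #(⋃ α ∈ U, {p ∈ B | α ∈ p.1 ∧ α ∉ R₁}) < c := by
    rw [Cardinal.card_biUnion_lt_iff_forall_of_isRegular hc hU]
    intro α _
    by_cases hα : α ∈ R₁
    · simpa [hα] using hc.pos
    · simpa [hα] using h1 α hα
  have e2 : #(⋃ α ∈ U, {p ∈ B | α ∈ p.2 ∧ α ∉ R₂}) < c := by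
    rw [Cardinal.card_biUnion_lt_iff_forall_of_isRegular hc hU]
    intro α _
    by_cases hα : α ∈ R₂
    · simpa [hα] using hc.pos
    · simpa [hα] using h2 α hα
  have e3 : #({(R₁, R₂)} : Set (Finset Ordinal.{0} × Finset Ordinal.{0})) < c := by
    rw [Cardinal.mk_singleton]
    exact Cardinal.one_lt_aleph0.trans_le hc.aleph0_le
  have e4 := Cardinal.add_lt_of_lt hc.aleph0_le e3 (Cardinal.add_lt_of_lt hc.aleph0_le e1 e2)
  have e5 := (Cardinal.mk_union_le _ _).trans_lt ((add_le_add_right (Cardinal.mk_union_le _ _) _).trans_lt e4)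
  refine absurd (e5.trans_le hB) (not_lt.2 (Cardinal.mk_le_mk_of_subset ?_))
  intro p hp
  by_cases hpR : p = (R₁, R₂)
  · exact Or.inl hpR
  · right
    by_cases hq : ∀ α ∈ p.1, α ∉ R₁ → α ∉ U
    · right
      obtain ⟨α, a1, a2, a3⟩ := h p hp hpR hq
      simp only [mem_iUnion]
      exact ⟨α, a3, hp, a1, a2⟩
    · left
      push Not at hq
      obtain ⟨α, a1, a2, a3⟩ := hq
      simp only [mem_iUnion]
      exact ⟨α, a3, hp, a1, a2⟩

theorem aux_fam (θ : Cardinal.{0}) (hθ : ℵ₀ < θ) (P : Set Ordinal.{0} → Prop)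
    (hfin : ∀ z, P z → z.Finite) (hne : ∀ z, P z → z.Nonempty)
    (hex : ∀ U : Set Ordinal.{0}, #U < Cardinal.lift.{1} θ → ∃ z, P z ∧ Disjoint z U) :
    ∃ f : Ordinal.{0} → Set Ordinal.{0}, (∀ i < θ.ord, P (f i)) ∧
      ∀ i < θ.ord, ∀ j < θ.ord, i ≠ j → Disjoint (f i) (f j) := by
  classical
  obtain ⟨Z, hZ⟩ := zorn_subset {Z : Set (Set Ordinal.{0}) | (∀ z ∈ Z, P z) ∧ Z.PairwiseDisjoint id}
    (by
      intro C hC hch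
      refine ⟨⋃₀ C, ⟨?_, ?_⟩, fun s hs => subset_sUnion_of_mem hs⟩
      · rintro z ⟨s, hs, hz⟩
        exact (hC hs).1 z hz
      · exact (hch.pairwiseDisjoint_sUnion _).2 fun s hs => (hC hs).2)
  have hbig : Cardinal.lift.{1} θ ≤ #Z := by
    by_contra! hlt
    have hθ' : ℵ₀ < Cardinal.lift.{1} θ := by simpa using hθ
    have hU : #(⋃₀ Z) < Cardinal.lift.{1} θ := by
      refine (Cardinal.mk_sUnion_le Z).trans_lt ?_
      refine Cardinal.mul_lt_of_lt hθ'.le hlt (lt_of_le_of_lt ?_ hθ')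
      refine ciSup_le' fun s => ?_
      exact (Cardinal.lt_aleph0_iff_set_finite.2 (hfin _ (hZ.prop.1 _ s.2))).le
    obtain ⟨z, hz, hd⟩ := hex _ hU
    have hmem : insert z Z ∈ {Z : Set (Set Ordinal.{0}) | (∀ z ∈ Z, P z) ∧ Z.PairwiseDisjoint id} := by
      refine ⟨?_, ?_⟩
      · rintro w (rfl | hw)
        · exact hz
        · exact hZ.prop.1 w hw
      · refine hZ.prop.2.insert fun w hw _ => ?_
        exact hd.mono_right (subset_sUnion_of_mem hw)
    have hzZ : z ∈ Z := hZ.le_of_ge hmem (subset_insert _ _) (mem_insert _ _)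
    have := hd.mono_right (subset_sUnion_of_mem hzZ)
    rw [disjoint_self] at this
    exact (hne z hz).ne_empty this
  have hI : #(Iio θ.ord) ≤ #Z := by
    rw [Cardinal.mk_Iio_ordinal, Cardinal.card_ord]
    exact hbig
  obtain ⟨e⟩ := hI
  refine ⟨fun i => if h : i < θ.ord then (e ⟨i, h⟩ : Set Ordinal.{0}) else ∅, ?_, ?_⟩
  · intro i hi
    simp only [hi, dif_pos]
    exact hZ.prop.1 _ (e ⟨i, hi⟩).2
  · intro i hi j hj hij
    simp only [hi, hj, dif_pos]
    refine hZ.prop.2 (e ⟨i, hi⟩).2 (e ⟨j, hj⟩).2 ?_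
    intro h
    have := e.injective (Subtype.ext h)
    exact hij (congrArg Subtype.val this)

theorem aux_inters_anti (a : Ordinal.{0} → Set ℕ) {x y : Set Ordinal} (h : x ⊆ y) :
    inters a y ⊆ inters a x := biInter_subset_biInter_left h

/-- Incompatibility in `Q` of two conditions with common part containing `R`. -/
theorem aux_incomp (θ : Cardinal.{0}) (a b : Ordinal.{0} → Set ℕ)
    (x S : Ordinal.{0} → Set Ordinal.{0}) (F K R : Finset Ordinal.{0})
    (hF : F ∈ QSet θ a b x S) (hK : K ∈ QSet θ a b x S) (hRF : R ⊆ F) (hRK : R ⊆ K)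
    (h : F ∪ K ∉ QSet θ a b x S) :
    ∃ α ∈ F, α ∉ R ∧ ∃ β ∈ K, β ∉ R ∧ ∀ i ∈ S α, ∀ j ∈ S β,
      inters a (x i) ∩ inters b (x j) = ∅ := by
  have h1 : ∀ α ∈ F ∪ K, α < θ.ord.cof.ord := by
    intro α hα
    rcases Finset.mem_union.1 hα with h | h
    · exact hF.1 α h
    · exact hK.1 α h
  have h2 : ∃ α ∈ F ∪ K, ∃ β ∈ F ∪ K, α ≠ β ∧ ∀ i ∈ S α, ∀ j ∈ S β,
      ¬ ((inters a (x i) ∩ inters b (x j)).Nonempty ∨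
        (inters b (x i) ∩ inters a (x j)).Nonempty) := by
    by_contra! hcon
    refine h ⟨h1, ?_⟩
    intro α hα β hβ hne
    exact hcon α hα β hβ hne
  obtain ⟨α, hα, β, hβ, hne, hno⟩ := h2
  have nF : ¬ (α ∈ F ∧ β ∈ F) := by
    rintro ⟨u, v⟩
    obtain ⟨i, hi, j, hj, hh⟩ := hF.2 α u β v hne
    exact hno i hi j hj hh
  have nK : ¬ (α ∈ K ∧ β ∈ K) := by
    rintro ⟨u, v⟩
    obtain ⟨i, hi, j, hj, hh⟩ := hK.2 α u β v hne
    exact hno i hi j hj hh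
  have sF := @hRF
  have sK := @hRK
  rw [Finset.mem_union] at hα hβ
  by_cases hαF : α ∈ F
  · have hβK : β ∈ K := by tauto
    refine ⟨α, hαF, fun hr => nK ⟨hRK hr, hβK⟩, β, hβK, fun hr => nF ⟨hαF, hRF hr⟩, ?_⟩
    intro i hi j hj
    rw [← not_nonempty_iff_eq_empty]
    exact fun hh => hno i hi j hj (Or.inl hh)
  · have hαK : α ∈ K := by tauto
    have hβF : β ∈ F := by tauto
    refine ⟨β, hβF, fun hr => nK ⟨hαK, hRK hr⟩, α, hαK, fun hr => nF ⟨hRF hr, hβF⟩, ?_⟩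
    intro i hi j hj
    rw [← not_nonempty_iff_eq_empty]
    refine fun hh => hno j hj i hi (Or.inr ?_)
    rwa [inter_comm]

theorem aux_avoid (x : Ordinal.{0} → Set Ordinal.{0}) (S U : Set Ordinal.{0})
    (hd : ∀ i ∈ S, ∀ j ∈ S, i ≠ j → Disjoint (x i) (x j)) (hc : #U < #S) :
    ∃ i ∈ S, Disjoint (x i) U := by
  by_contra! h
  have h' : ∀ i : S, ∃ u : U, (u : Ordinal) ∈ x i := by
    intro i
    obtain ⟨u, h1, h2⟩ := Set.not_disjoint_iff.1 (h i i.2)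
    exact ⟨⟨u, h2⟩, h1⟩
  choose f hf using h'
  refine absurd hc (not_lt.2 (Cardinal.mk_le_of_injective (f := f) ?_))
  intro i j hij
  by_contra hne
  refine Set.disjoint_left.1 (hd i i.2 j j.2 fun h => hne (Subtype.ext h)) (hf i) ?_
  rw [hij]
  exact hf j

theorem aux_inters_empty_nonempty {a b : Ordinal.{0} → Set ℕ} {x : Set Ordinal.{0}}
    (h : inters a x ∩ inters b x = ∅) : x.Nonempty := by
  rw [nonempty_iff_ne_empty]
  rintro rfl
  simp [inters] at h

theorem aux_forward (θ : Cardinal.{0}) (θseq : Ordinal.{0} → Cardinal.{0})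
    (a b : Ordinal.{0} → Set ℕ)
    (hκ : ℵ₀ < θ.ord.cof) (hsing : θ.ord.cof < θ)
    (hmono : ∀ α β : Ordinal, α < β → β < θ.ord.cof.ord → θseq α < θseq β)
    (hsup : sSup (θseq '' Set.Iio θ.ord.cof.ord) = θ)
    (hnice : IsNice θ a b)
    (x y S T : Ordinal.{0} → Set Ordinal.{0}) (hx : DisjFinFam θ x) (hy : DisjFinFam θ y)
    (hS : XSeq θ θseq a b x S) (hT : XSeq θ θseq a b y T) :
    KCC2 θ.ord.cof (QSet θ a b x S) (QSet θ a b y T) := by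
  classical
  rintro ⟨A, hAQ, hAinc, hAc⟩
  have hθ : ℵ₀ < θ := hκ.trans hsing
  have hreg : θ.ord.cof.IsRegular := Cardinal.isRegular_cof (Cardinal.isSuccLimit_ord hθ.le)
  have hreg' := Cardinal.IsRegular.lift.{1} hreg
  obtain ⟨B, hBA, R₁, R₂, hBR, hBc, hB1, hB2⟩ := aux_delta _ hreg'
    (Cardinal.aleph0_lt_lift.2 hκ) A hAc
  let P : Set Ordinal.{0} → Prop := fun z => ∃ p ∈ B, p ≠ (R₁, R₂) ∧
    ∃ f g : Ordinal.{0} → Ordinal.{0}, (∀ α ∈ p.1 \ R₁, f α ∈ S α) ∧ (∀ α ∈ p.2 \ R₂, g α ∈ T α) ∧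
      z = (⋃ α ∈ p.1 \ R₁, x (f α)) ∪ ⋃ α ∈ p.2 \ R₂, y (g α)
  have hlt1 : ∀ p ∈ B, ∀ α ∈ p.1, α < θ.ord.cof.ord := fun p hp => (hAQ p (hBA hp)).1.1
  have hlt2 : ∀ p ∈ B, ∀ α ∈ p.2, α < θ.ord.cof.ord := fun p hp => (hAQ p (hBA hp)).2.1
  have hside : ∀ p ∈ B, p ≠ (R₁, R₂) → (∃ α, α ∈ p.1 \ R₁) ∨ (∃ α, α ∈ p.2 \ R₂) := by
    intro p hp hne
    by_contra! h
    refine hne (Prod.ext ?_ ?_)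
    · refine Finset.Subset.antisymm (fun α hα => ?_) (hBR p hp).1
      by_contra hh
      exact h.1 α (Finset.mem_sdiff.2 ⟨hα, hh⟩)
    · refine Finset.Subset.antisymm (fun α hα => ?_) (hBR p hp).2
      by_contra hh
      exact h.2 α (Finset.mem_sdiff.2 ⟨hα, hh⟩)
  have hPP : ∀ z w, P z → P w → inters a z ∩ inters b w = ∅ := by
    rintro z w ⟨p, hp, hpR, f, g, hf, hg, rfl⟩ ⟨q, hq, hqR, f', g', hf', hg', rfl⟩
    have key1 : ∀ α ∈ p.1 \ R₁, ∀ β ∈ q.1 \ R₁,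
        inters a (x (f α)) ∩ inters b (x (f' β)) = ∅ →
        inters a ((⋃ α ∈ p.1 \ R₁, x (f α)) ∪ ⋃ α ∈ p.2 \ R₂, y (g α)) ∩
        inters b ((⋃ α ∈ q.1 \ R₁, x (f' α)) ∪ ⋃ α ∈ q.2 \ R₂, y (g' α)) = ∅ := by
      intro α hα β hβ h
      refine subset_empty_iff.1 (h ▸ inter_subset_inter (aux_inters_anti a ?_) (aux_inters_anti b ?_))
      · exact (subset_biUnion_of_mem (u := fun α => x (f α)) hα).trans subset_union_left
      · exact (subset_biUnion_of_mem (u := fun α => x (f' α)) hβ).trans subset_union_left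
    have key2 : ∀ α ∈ p.2 \ R₂, ∀ β ∈ q.2 \ R₂,
        inters a (y (g α)) ∩ inters b (y (g' β)) = ∅ →
        inters a ((⋃ α ∈ p.1 \ R₁, x (f α)) ∪ ⋃ α ∈ p.2 \ R₂, y (g α)) ∩
        inters b ((⋃ α ∈ q.1 \ R₁, x (f' α)) ∪ ⋃ α ∈ q.2 \ R₂, y (g' α)) = ∅ := by
      intro α hα β hβ h
      refine subset_empty_iff.1 (h ▸ inter_subset_inter (aux_inters_anti a ?_) (aux_inters_anti b ?_))
      · exact (subset_biUnion_of_mem (u := fun α => y (g α)) hα).trans subset_union_right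
      · exact (subset_biUnion_of_mem (u := fun α => y (g' α)) hβ).trans subset_union_right
    by_cases hpq : p = q
    · subst hpq
      rcases hside p hp hpR with ⟨α, hα⟩ | ⟨α, hα⟩
      · exact key1 α hα α hα
          (hS.2.2.2 α (hlt1 p hp α (Finset.mem_sdiff.1 hα).1) _ (hf α hα) _ (hf' α hα))
      · exact key2 α hα α hα
          (hT.2.2.2 α (hlt2 p hp α (Finset.mem_sdiff.1 hα).1) _ (hg α hα) _ (hg' α hα))
    · have hinc := hAinc p (hBA hp) q (hBA hq) hpq
      by_cases h1 : p.1 ∪ q.1 ∈ QSet θ a b x S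
      · have h2 : p.2 ∪ q.2 ∉ QSet θ a b y T := fun h => hinc ⟨h1, h⟩
        obtain ⟨α, u1, u2, β, v1, v2, hh⟩ := aux_incomp θ a b y T p.2 q.2 R₂ (hAQ p (hBA hp)).2
          (hAQ q (hBA hq)).2 (hBR p hp).2 (hBR q hq).2 h2
        have hα := Finset.mem_sdiff.2 ⟨u1, u2⟩
        have hβ := Finset.mem_sdiff.2 ⟨v1, v2⟩
        exact key2 α hα β hβ (hh _ (hg α hα) _ (hg' β hβ))
      · obtain ⟨α, u1, u2, β, v1, v2, hh⟩ := aux_incomp θ a b x S p.1 q.1 R₁ (hAQ p (hBA hp)).1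
          (hAQ q (hBA hq)).1 (hBR p hp).1 (hBR q hq).1 h1
        have hα := Finset.mem_sdiff.2 ⟨u1, u2⟩
        have hβ := Finset.mem_sdiff.2 ⟨v1, v2⟩
        exact key1 α hα β hβ (hh _ (hf α hα) _ (hf' β hβ))
  have hPsub : ∀ z, P z → z.Finite ∧ z ⊆ Iio θ.ord := by
    rintro z ⟨p, hp, hpR, f, g, hf, hg, rfl⟩
    have e1 : ∀ α ∈ p.1 \ R₁, f α < θ.ord := fun α hα =>
      hS.1 α (hlt1 p hp α (Finset.mem_sdiff.1 hα).1) (hf α hα)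
    have e2 : ∀ α ∈ p.2 \ R₂, g α < θ.ord := fun α hα =>
      hT.1 α (hlt2 p hp α (Finset.mem_sdiff.1 hα).1) (hg α hα)
    refine ⟨Set.Finite.union ?_ ?_, union_subset ?_ ?_⟩
    · exact (Finset.finite_toSet (p.1 \ R₁)).biUnion fun α hα => (hx.1 _ (e1 α hα)).1
    · exact (Finset.finite_toSet (p.2 \ R₂)).biUnion fun α hα => (hy.1 _ (e2 α hα)).1
    · exact iUnion₂_subset fun α hα => (hx.1 _ (e1 α hα)).2
    · exact iUnion₂_subset fun α hα => (hy.1 _ (e2 α hα)).2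
  have hseq : ∀ α β : Ordinal, α ≤ β → β < θ.ord.cof.ord → θseq α ≤ θseq β := by
    intro α β h hb
    rcases h.eq_or_lt with rfl | h
    · exact le_rfl
    · exact (hmono α β h hb).le
  obtain ⟨f, hfP, hfd⟩ := aux_fam θ hθ P (fun z hz => (hPsub z hz).1)
    (fun z hz => aux_inters_empty_nonempty (hPP z z hz hz)) (by
      intro U hU
      obtain ⟨c, hcθ, hcU⟩ := Cardinal.lt_lift_iff.1 hU
      rw [← hsup] at hcθ
      obtain ⟨_, ⟨γ, hγ, rfl⟩, hγc⟩ := exists_lt_of_lt_csSup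
        ((show (Iio θ.ord.cof.ord).Nonempty from ⟨0, hreg.ord_pos⟩).image _) hcθ
      obtain ⟨p, hp, hpR, hp1, hp2⟩ := aux_pick _ hreg' B R₁ R₂ hBc hB1 hB2 (Iio γ) (by
        rw [Cardinal.mk_Iio_ordinal, Cardinal.lift_lt]
        exact Cardinal.lt_ord.1 hγ)
      have f1 : ∀ α, ∃ i, α ∈ p.1 \ R₁ → i ∈ S α ∧ Disjoint (x i) U := by
        intro α
        by_cases hα : α ∈ p.1 \ R₁
        · obtain ⟨u, v⟩ := Finset.mem_sdiff.1 hα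
          have hl := hlt1 p hp α u
          obtain ⟨i, hi, hd⟩ := aux_avoid x (S α) U
            (fun i hi j hj hij => hx.2 i (hS.1 α hl hi) j (hS.1 α hl hj) hij) (by
              refine lt_trans ?_ (hS.2.2.1 α hl)
              rw [← hcU, Cardinal.lift_lt]
              exact hγc.trans_le (hseq _ _ (not_lt.1 (hp1 α u v)) hl))
          exact ⟨i, fun _ => ⟨hi, hd⟩⟩
        · exact ⟨0, fun h => absurd h hα⟩
      have f2 : ∀ α, ∃ i, α ∈ p.2 \ R₂ → i ∈ T α ∧ Disjoint (y i) U := by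
        intro α
        by_cases hα : α ∈ p.2 \ R₂
        · obtain ⟨u, v⟩ := Finset.mem_sdiff.1 hα
          have hl := hlt2 p hp α u
          obtain ⟨i, hi, hd⟩ := aux_avoid y (T α) U
            (fun i hi j hj hij => hy.2 i (hT.1 α hl hi) j (hT.1 α hl hj) hij) (by
              refine lt_trans ?_ (hT.2.2.1 α hl)
              rw [← hcU, Cardinal.lift_lt]
              exact hγc.trans_le (hseq _ _ (not_lt.1 (hp2 α u v)) hl))
          exact ⟨i, fun _ => ⟨hi, hd⟩⟩
        · exact ⟨0, fun h => absurd h hα⟩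
      choose f hf using f1
      choose g hg using f2
      refine ⟨_, ⟨p, hp, hpR, f, g, fun α hα => (hf α hα).1, fun α hα => (hg α hα).1, rfl⟩, ?_⟩
      rw [disjoint_union_left, disjoint_iUnion₂_left, disjoint_iUnion₂_left]
      exact ⟨fun α hα => (hf α hα).2, fun α hα => (hg α hα).2⟩)
  obtain ⟨i, hi, j, hj, hne⟩ := hnice f ⟨fun i hi => hPsub _ (hfP i hi), hfd⟩
  rw [hPP _ _ (hfP i hi) (hfP j hj)] at hne
  exact not_nonempty_empty hne

theorem aux_backward (θ : Cardinal.{0}) (θseq : Ordinal.{0} → Cardinal.{0})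
    (a b : Ordinal.{0} → Set ℕ)
    (hκ : ℵ₀ < θ.ord.cof) (hsing : θ.ord.cof < θ)
    (hmono : ∀ α β : Ordinal, α < β → β < θ.ord.cof.ord → θseq α < θseq β)
    (hsup : sSup (θseq '' Set.Iio θ.ord.cof.ord) = θ)
    (H : ∀ x y S T : Ordinal.{0} → Set Ordinal.{0}, DisjFinFam θ x → DisjFinFam θ y →
        XSeq θ θseq a b x S → XSeq θ θseq a b y T →
        KCC2 θ.ord.cof (QSet θ a b x S) (QSet θ a b y T)) : IsNice θ a b := by
  classical
  intro x hx
  by_contra! hno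
  have hθ : ℵ₀ < θ := hκ.trans hsing
  have hreg : θ.ord.cof.IsRegular := Cardinal.isRegular_cof (Cardinal.isSuccLimit_ord hθ.le)
  have hlt : ∀ α < θ.ord.cof.ord, θseq α < θ := by
    intro α hα
    have hs : Order.succ α < θ.ord.cof.ord :=
      (Cardinal.isSuccLimit_ord hκ.le).succ_lt hα
    refine (hmono α _ (Order.lt_succ α) hs).trans_le ?_
    have hb : BddAbove (θseq '' Iio θ.ord.cof.ord) := Cardinal.bddAbove_of_small
    exact (le_csSup hb ⟨_, hs, rfl⟩).trans hsup.le
  have hprod : #(Iio θ.ord.cof.ord × Iio θ.ord) = #(Iio θ.ord) := by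
    rw [Cardinal.mk_prod, Cardinal.mk_Iio_ordinal, Cardinal.mk_Iio_ordinal, Cardinal.card_ord,
      Cardinal.card_ord, Cardinal.lift_lift, Cardinal.lift_lift]
    refine Cardinal.mul_eq_right (by simpa using hθ.le) (Cardinal.lift_le.2 hsing.le) ?_
    exact (Cardinal.IsRegular.lift.{1} hreg).ne_zero
  obtain ⟨e⟩ := Cardinal.eq.1 hprod
  let S : Ordinal.{0} → Set Ordinal.{0} := fun α =>
    {o | ∃ (h : α < θ.ord.cof.ord) (v : Iio θ.ord), (e (⟨α, h⟩, v) : Ordinal) = o}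
  have hSsub : ∀ α, S α ⊆ Iio θ.ord := by
    rintro α _ ⟨h, v, rfl⟩
    exact (e (⟨α, h⟩, v)).2
  have hXS : XSeq θ θseq a b x S := by
    refine ⟨fun α _ => hSsub α, ?_, ?_, ?_⟩
    · intro α hα β hβ hne
      rw [Set.disjoint_left]
      rintro _ ⟨h, v, rfl⟩ ⟨h', v', heq⟩
      have := e.injective (Subtype.ext heq)
      exact hne (congrArg (fun q => (q.1 : Ordinal)) this).symm
    · intro α hα
      have h1 : Cardinal.lift.{1} (θseq α) < #(Iio θ.ord) := by
        rw [Cardinal.mk_Iio_ordinal, Cardinal.card_ord, Cardinal.lift_lt]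
        exact hlt α hα
      refine h1.trans_le (Cardinal.mk_le_of_injective
        (f := fun v => (⟨e (⟨α, hα⟩, v), hα, v, rfl⟩ : S α)) ?_)
      intro v w hvw
      have h2 : (e (⟨α, hα⟩, v) : Ordinal) = e (⟨α, hα⟩, w) :=
        congrArg (fun t : S α => (t : Ordinal)) hvw
      exact congrArg Prod.snd (e.injective (Subtype.ext h2))
    · intro α hα i hi j hj
      exact hno i (hSsub α hi) j (hSsub α hj)
  refine H x x S S hx hx hXS hXS ⟨(fun α => ({α}, ∅)) '' Iio θ.ord.cof.ord, ?_, ?_, ?_⟩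
  · rintro _ ⟨α, hα, rfl⟩
    refine ⟨⟨?_, ?_⟩, ⟨?_, ?_⟩⟩
    · intro β hβ
      rw [Finset.mem_singleton.1 hβ]
      exact hα
    · intro β hβ γ hγ hne
      rw [Finset.mem_singleton] at hβ hγ
      exact absurd (hβ.trans hγ.symm) hne
    · simp
    · simp
  · rintro _ ⟨α, hα, rfl⟩ _ ⟨β, hβ, rfl⟩ hne ⟨h1, -⟩
    have hab : α ≠ β := by
      rintro rfl
      exact hne rfl
    obtain ⟨i, hi, j, hj, hh⟩ := h1.2 α (by simp) β (by simp) hab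
    rcases hh with hh | hh
    · rw [hno i (hSsub α hi) j (hSsub β hj)] at hh
      exact not_nonempty_empty hh
    · rw [inter_comm, hno j (hSsub β hj) i (hSsub α hi)] at hh
      exact not_nonempty_empty hh
  · rw [Cardinal.mk_image_eq, Cardinal.mk_Iio_ordinal, Cardinal.card_ord]
    intro α β h
    simpa using h

/-- Lemma 1: `(A,B)` is nice iff for all families `X, Y` of pairwise
disjoint finite subsets of `θ`, every `X`-sequence `S` and every `Y`-sequence `T`,
the product `Q(X,S) × Q(Y,T)` is `κ.c.c.` -/
theorem statement3 (θ : Cardinal.{0}) (θseq : Ordinal.{0} → Cardinal.{0})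
    (a b : Ordinal.{0} → Set ℕ)
    (hκ : ℵ₀ < θ.ord.cof) (hsing : θ.ord.cof < θ)
    (hmono : ∀ α β : Ordinal, α < β → β < θ.ord.cof.ord → θseq α < θseq β)
    (hsup : sSup (θseq '' Set.Iio θ.ord.cof.ord) = θ)
    (h0 : θ.ord.cof < θseq 0)
    (hpair : IsPair θ a b) :
    IsNice θ a b ↔
      ∀ x y S T : Ordinal.{0} → Set Ordinal.{0}, DisjFinFam θ x → DisjFinFam θ y →
        XSeq θ θseq a b x S → XSeq θ θseq a b y T →
        KCC2 θ.ord.cof (QSet θ a b x S) (QSet θ a b y T) := by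
  exact ⟨fun hn x y S T hx hy hS hT =>
    aux_forward θ θseq a b hκ hsing hmono hsup hn x y S T hx hy hS hT,
    aux_backward θ θseq a b hκ hsing hmono hsup⟩
end

section
/- Let (A,B) be a (θ,θ) pair. Then (A,B) is nice if and only if for every family X = {x_u : u < θ} of pairwise disjoint finite subsets of θ and every X-sequence S = ⟨S_α : α < κ⟩, the partial order Q(X,S) is κ.c.c. -/
open Cardinal Set

theorem delta_aux (κ : Cardinal.{1}) (hreg : κ.IsRegular) (n : ℕ) :
    ∀ (R : Finset Ordinal.{0}) (A : Set (Finset Ordinal.{0})),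
      (∀ F ∈ A, R ⊆ F ∧ (F \ R).card ≤ n) → κ ≤ #A →
      ∃ (R' : Finset Ordinal.{0}) (A' : Set (Finset Ordinal.{0})),
        A' ⊆ A ∧ κ ≤ #A' ∧ A'.Pairwise (fun F K => F ∩ K = R') := by
  induction n with
  | zero =>
    intro R A hA hκ
    refine ⟨R, A, Subset.rfl, hκ, ?_⟩
    intro F hF K hK hne
    exfalso
    apply hne
    have key : ∀ F ∈ A, F = R := by
      intro F hF
      obtain ⟨h1, h2⟩ := hA F hF
      have h3 : F \ R = ∅ := by simpa using h2
      exact Finset.Subset.antisymm (Finset.sdiff_eq_empty_iff_subset.1 h3) h1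
    rw [key F hF, key K hK]
  | succ n ih =>
    intro R A hA hκ
    by_cases hc : ∃ α, α ∉ R ∧ κ ≤ #{F | F ∈ A ∧ α ∈ F}
    · obtain ⟨α, hαR, hα⟩ := hc
      obtain ⟨R', A', h1, h2, h3⟩ := ih (insert α R) {F | F ∈ A ∧ α ∈ F} (by
        rintro F ⟨hF, hαF⟩
        obtain ⟨h1, h2⟩ := hA F hF
        refine ⟨Finset.insert_subset hαF h1, ?_⟩
        have h4 : F \ insert α R = (F \ R).erase α := by
          ext z; simp only [Finset.mem_sdiff, Finset.mem_insert, Finset.mem_erase]; tauto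
        rw [h4, Finset.card_erase_of_mem (by simp [hαF, hαR])]
        omega) hα
      exact ⟨R', A', h1.trans (fun F hF => hF.1), h2, h3⟩
    · push Not at hc
      obtain ⟨M, hM⟩ := zorn_subset
        {M : Set (Finset Ordinal.{0}) | M ⊆ A ∧ M.Pairwise (fun F K => F ∩ K = R)} (by
          intro c hc hchain
          refine ⟨⋃₀ c, ⟨sUnion_subset fun s hs => (hc hs).1, ?_⟩,
            fun s hs => subset_sUnion_of_mem hs⟩
          rw [Set.pairwise_sUnion hchain.directedOn]
          exact fun s hs => (hc hs).2)
      refine ⟨R, M, hM.prop.1, ?_, hM.prop.2⟩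
      by_contra hlt
      push Not at hlt
      have hU : #(⋃ K ∈ M, ((K \ R : Finset Ordinal.{0}) : Set Ordinal.{0})) < κ := by
        rw [card_biUnion_lt_iff_forall_of_isRegular hreg hlt]
        intro K hK
        exact (Set.Finite.lt_aleph0 (Finset.finite_toSet _)).trans_le hreg.aleph0_le
      have hV : #(⋃ α ∈ (⋃ K ∈ M, ((K \ R : Finset Ordinal.{0}) : Set Ordinal.{0})),
          {F | F ∈ A ∧ α ∈ F}) < κ := by
        rw [card_biUnion_lt_iff_forall_of_isRegular hreg hU]
        intro α hα
        apply hc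
        simp only [mem_iUnion, Finset.mem_coe, Finset.mem_sdiff] at hα
        obtain ⟨K, _, hK⟩ := hα
        exact hK.2
      have hsub : A ⊆ M ∪ ⋃ α ∈ (⋃ K ∈ M, ((K \ R : Finset Ordinal.{0}) : Set Ordinal.{0})),
          {F | F ∈ A ∧ α ∈ F} := by
        intro F hF
        by_contra hnot
        simp only [mem_union, mem_iUnion, Finset.mem_coe, Finset.mem_sdiff, not_or, not_exists,
          mem_ofPred_eq] at hnot
        obtain ⟨hFM, hno⟩ := hnot
        apply hFM
        refine hM.le_of_ge (y := insert F M) ⟨insert_subset hF hM.prop.1, ?_⟩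
          (subset_insert F M) (mem_insert F M)
        have hsym : Std.Symm (fun F K : Finset Ordinal.{0} => F ∩ K = R) :=
          ⟨fun F K h => by rw [Finset.inter_comm]; exact h⟩
        rw [Set.pairwise_insert_of_symm]
        refine ⟨hM.prop.2, fun K hK _ => ?_⟩
        ext z
        simp only [Finset.mem_inter]
        constructor
        · rintro ⟨hz1, hz2⟩
          by_contra hzR
          exact hno z ⟨K, hK, hz2, hzR⟩ ⟨hF, hz1⟩
        · intro hz
          exact ⟨(hA F hF).1 hz, (hA K (hM.prop.1 hK)).1 hz⟩
      have := (mk_le_mk_of_subset hsub).trans (mk_union_le _ _)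
      exact absurd (hκ.trans this) (not_le.2 (add_lt_of_lt hreg.aleph0_le hlt hV))

theorem delta_system (κ : Cardinal.{1}) (hreg : κ.IsRegular) (hunc : ℵ₀ < κ)
    (A : Set (Finset Ordinal.{0})) (hA : κ ≤ #A) :
    ∃ (R : Finset Ordinal.{0}) (A' : Set (Finset Ordinal.{0})),
      A' ⊆ A ∧ κ ≤ #A' ∧ A'.Pairwise (fun F K => F ∩ K = R) := by
  obtain ⟨n, t, hts, ht, hn⟩ := infinite_pigeonhole_set (s := A)
    (fun F => (ULift.up (F : Finset Ordinal.{0}).card : ULift.{1} ℕ)) κ hA hreg.aleph0_le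
    (by rw [hreg.cof_ord]; simpa using hunc)
  obtain ⟨R, A', h1, h2, h3⟩ := delta_aux κ hreg n.down ∅ t (by
    intro F hF
    refine ⟨Finset.empty_subset _, ?_⟩
    rw [Finset.sdiff_empty, ← hn hF]) ht
  exact ⟨R, A', h1.trans hts, h2, h3⟩

/-- `(A,B)` is nice iff for every family `X` of pairwise disjoint
finite subsets of `θ` and every `X`-sequence `S`, the poset `Q(X,S)` is `κ.c.c.` -/
theorem statement4 (θ : Cardinal.{0}) (θseq : Ordinal.{0} → Cardinal.{0})
    (a b : Ordinal.{0} → Set ℕ)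
    (hκ : ℵ₀ < θ.ord.cof) (hsing : θ.ord.cof < θ)
    (hmono : ∀ α β : Ordinal, α < β → β < θ.ord.cof.ord → θseq α < θseq β)
    (hsup : sSup (θseq '' Set.Iio θ.ord.cof.ord) = θ)
    (h0 : θ.ord.cof < θseq 0)
    (hpair : IsPair θ a b) :
    IsNice θ a b ↔
      ∀ x S : Ordinal.{0} → Set Ordinal.{0}, DisjFinFam θ x →
        XSeq θ θseq a b x S → KCC θ.ord.cof (QSet θ a b x S) := by
  have hκ0 : ℵ₀ ≤ θ.ord.cof := hκ.le
  have hθ0 : ℵ₀ ≤ θ := hκ0.trans hsing.le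
  have hreg : θ.ord.cof.IsRegular := isRegular_cof (isSuccLimit_ord hθ0)
  have hbdd : BddAbove (θseq '' Set.Iio θ.ord.cof.ord) := Cardinal.bddAbove_of_small
  have hlim : Order.IsSuccLimit θ.ord.cof.ord := isSuccLimit_ord hκ0
  constructor
  · -- forward
    rintro hnice x S hx ⟨hS1, hS2, hS3, hS4⟩ ⟨A, hAQ, hanti, hAcard⟩
    have hκlift : ℵ₀ < Cardinal.lift.{1,0} θ.ord.cof := by
      rw [← Cardinal.lift_aleph0.{1,0}, Cardinal.lift_lt]; exact hκ
    obtain ⟨R, A', hA', hcard, hpw⟩ := delta_system (Cardinal.lift.{1,0} θ.ord.cof) hreg.lift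
      hκlift A hAcard.ge
    -- witnesses
    have hwit : ∀ F ∈ A', ∀ K ∈ A', F ≠ K → ∃ α ∈ F \ R, ∃ β ∈ K \ R,
        ∀ i ∈ S α, ∀ j ∈ S β, inters a (x i) ∩ inters b (x j) = ∅ := by
      intro F hF K hK hne
      have hno := hanti F (hA' hF) K (hA' hK) hne
      have hFQ := hAQ (hA' hF)
      have hKQ := hAQ (hA' hK)
      have hR := hpw hF hK hne
      simp only at hR
      by_contra hcon
      push Not at hcon
      apply hno
      have hmem : ∀ z, z ∈ R ↔ z ∈ F ∧ z ∈ K := by intro z; rw [← hR]; simp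
      refine ⟨?_, ?_⟩
      · intro α hα
        rcases Finset.mem_union.1 hα with h | h
        · exact hFQ.1 α h
        · exact hKQ.1 α h
      · intro α hα β hβ hαβ
        by_cases h1 : α ∈ F ∧ β ∈ F
        · exact hFQ.2 α h1.1 β h1.2 hαβ
        by_cases h2 : α ∈ K ∧ β ∈ K
        · exact hKQ.2 α h2.1 β h2.2 hαβ
        rw [Finset.mem_union] at hα hβ
        by_cases h3 : α ∈ F
        · obtain ⟨i, hi, j, hj, hij⟩ := hcon α
            (by rw [Finset.mem_sdiff, hmem]; tauto) β (by rw [Finset.mem_sdiff, hmem]; tauto)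
          exact ⟨i, hi, j, hj, Or.inl hij⟩
        · obtain ⟨i, hi, j, hj, hij⟩ := hcon β
            (by rw [Finset.mem_sdiff, hmem]; tauto) α (by rw [Finset.mem_sdiff, hmem]; tauto)
          exact ⟨j, hj, i, hi, Or.inr (by rwa [inter_comm])⟩
    have hbig : ∀ c : Cardinal.{1}, c < Cardinal.lift.{1,0} θ.ord.cof →
        ∀ B : Set (Finset Ordinal.{0}), #B ≤ c → ∃ F ∈ A', F ∉ B := by
      intro c hc B hB
      by_contra hcon
      push Not at hcon
      exact absurd (hcard.trans (mk_le_mk_of_subset hcon)) (not_le.2 (hB.trans_lt hc))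
    have hne : ∀ F ∈ A', (F \ R).Nonempty := by
      intro F hF
      obtain ⟨K, hK, hKF⟩ := hbig 1 (one_lt_aleph0.trans hκlift) {F} (by simp)
      obtain ⟨α, hα, _⟩ := hwit F hF K hK (fun h => hKF (by simp [h]))
      exact ⟨α, hα⟩
    have hRsub : ∀ F ∈ A', ∀ K ∈ A', ∀ α ∈ F \ R, α ∈ K \ R → F = K := by
      intro F hF K hK α hα hα'
      by_contra hFK
      have := hpw hF hK hFK
      simp only at this
      rw [Finset.mem_sdiff] at hα hα'
      apply hα.2
      rw [← this]
      exact Finset.mem_inter.2 ⟨hα.1, hα'.1⟩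
    have hAlt : ∀ F ∈ A', ∀ α ∈ F \ R, α < θ.ord.cof.ord := fun F hF α hα =>
      (hAQ (hA' hF)).1 α (Finset.mem_sdiff.1 hα).1
    -- choice of F
    have hF : ∀ i : Ordinal.{0}, ∃ F, i < θ.ord → F ∈ A' ∧ ∀ α ∈ F \ R, i.card ≤ θseq α := by
      intro i
      by_cases hi : i < θ.ord
      swap
      · exact ⟨∅, fun h => absurd h hi⟩
      have h1 : i.card < sSup (θseq '' Set.Iio θ.ord.cof.ord) := by
        rw [hsup]; exact lt_ord.1 hi
      obtain ⟨_, ⟨β, hβ, rfl⟩, hiβ⟩ := exists_lt_of_lt_csSup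
        (Set.Nonempty.image θseq ⟨0, hreg.ord_pos⟩) h1
      obtain ⟨F, hF, hFB⟩ := hbig #(Set.Iio β) (by
          rw [mk_Iio_ordinal, Cardinal.lift_lt]; exact lt_ord.1 hβ)
        {F | F ∈ A' ∧ ∃ α ∈ F \ R, α < β} (by
          refine mk_le_of_injective (f := fun F => ⟨F.2.2.choose, F.2.2.choose_spec.2⟩) ?_
          intro F K hFK
          have h2 : F.2.2.choose = K.2.2.choose := congrArg Subtype.val hFK
          apply Subtype.ext
          refine hRsub _ F.2.1 _ K.2.1 _ F.2.2.choose_spec.1 ?_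
          rw [h2]
          exact K.2.2.choose_spec.1)
      refine ⟨F, fun _ => ⟨hF, fun α hα => ?_⟩⟩
      have h3 : β ≤ α := by
        by_contra h4
        exact hFB ⟨hF, α, hα, not_le.1 h4⟩
      rcases h3.eq_or_lt with rfl | h3
      · exact hiβ.le
      · exact hiβ.le.trans (hmono _ _ h3 (hAlt F hF α hα)).le
    choose Fc hFc using hF
    -- injections
    have he : ∀ α : Ordinal.{0}, ∃ e : Ordinal.{0} → Ordinal.{0}, α < θ.ord.cof.ord →
        (∀ i, i.card ≤ θseq α → e i ∈ S α) ∧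
        ∀ i j, i.card ≤ θseq α → j.card ≤ θseq α → e i = e j → i = j := by
      intro α
      by_cases hα : α < θ.ord.cof.ord
      swap
      · exact ⟨id, fun h => absurd h hα⟩
      have h1 : #(Set.Iio (Order.succ (θseq α)).ord) ≤ #(S α) := by
        rw [mk_Iio_ordinal, card_ord, Cardinal.lift_succ]
        exact Order.succ_le_of_lt (hS3 α hα)
      obtain ⟨f⟩ := h1
      have h2 : ∀ i : Ordinal.{0}, i.card ≤ θseq α → i < (Order.succ (θseq α)).ord := by
        intro i hi
        rw [lt_ord, Order.lt_succ_iff]; exact hi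
      classical
      refine ⟨fun i => if h : i.card ≤ θseq α then f ⟨i, h2 i h⟩ else 0, fun _ => ⟨?_, ?_⟩⟩
      · intro i hi
        simp only [hi, dite_true]
        exact (f _).2
      · intro i j hi hj hij
        simp only [hi, hj, dite_true] at hij
        have := f.injective (Subtype.ext hij)
        exact congrArg Subtype.val this
    choose e he using he
    have hmemS : ∀ i < θ.ord, ∀ α ∈ Fc i \ R, e α i ∈ S α := fun i hi α hα =>
      (he α (hAlt _ (hFc i hi).1 α hα)).1 i ((hFc i hi).2 α hα)
    have hmemθ : ∀ i < θ.ord, ∀ α ∈ Fc i \ R, e α i < θ.ord := fun i hi α hα =>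
      hS1 α (hAlt _ (hFc i hi).1 α hα) (hmemS i hi α hα)
    obtain ⟨i, hi, j, hj, m, hm1, hm2⟩ := hnice (fun i => ⋃ α ∈ Fc i \ R, x (e α i)) (by
      refine ⟨fun i hi => ⟨?_, ?_⟩, fun i hi j hj hij => ?_⟩
      · exact Set.Finite.biUnion (Finset.finite_toSet _)
          (fun α hα => (hx.1 _ (hmemθ i hi α hα)).1)
      · exact iUnion₂_subset fun α hα => (hx.1 _ (hmemθ i hi α hα)).2
      · rw [Set.disjoint_left]
        intro ξ h1 h2
        simp only [mem_iUnion] at h1 h2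
        obtain ⟨α, hα, h1⟩ := h1
        obtain ⟨β, hβ, h2⟩ := h2
        have hα' := hAlt _ (hFc i hi).1 α hα
        have hβ' := hAlt _ (hFc j hj).1 β hβ
        have heq : e α i = e β j := by
          by_contra h3
          exact Set.disjoint_left.1 (hx.2 _ (hmemθ i hi α hα) _ (hmemθ j hj β hβ) h3) h1 h2
        have hab : α = β := by
          by_contra h3
          refine Set.disjoint_left.1 (hS2 α hα' β hβ' h3) (hmemS i hi α hα) ?_
          rw [heq]; exact hmemS j hj β hβ
        subst hab
        exact hij ((he α hα').2 i j ((hFc i hi).2 α hα) ((hFc j hj).2 α hβ) heq))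
    have hsuba : ∀ α ∈ Fc i \ R, m ∈ inters a (x (e α i)) := by
      intro α hα
      simp only [inters, mem_iInter] at hm1 ⊢
      intro ξ hξ
      exact hm1 ξ (mem_iUnion₂.2 ⟨α, hα, hξ⟩)
    have hsubb : ∀ α ∈ Fc j \ R, m ∈ inters b (x (e α j)) := by
      intro α hα
      simp only [inters, mem_iInter] at hm2 ⊢
      intro ξ hξ
      exact hm2 ξ (mem_iUnion₂.2 ⟨α, hα, hξ⟩)
    by_cases hFF : Fc i = Fc j
    · obtain ⟨α, hα⟩ := hne _ (hFc i hi).1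
      have hα2 : α ∈ Fc j \ R := hFF ▸ hα
      have h5 := hS4 α (hAlt _ (hFc i hi).1 α hα) _ (hmemS i hi α hα) _ (hmemS j hj α hα2)
      exact (h5 ▸ (⟨hsuba α hα, hsubb α hα2⟩ :
        m ∈ inters a (x (e α i)) ∩ inters b (x (e α j))) : m ∈ (∅ : Set ℕ))
    · obtain ⟨α, hα, β, hβ, h5⟩ := hwit _ (hFc i hi).1 _ (hFc j hj).1 hFF
      have h5 := h5 _ (hmemS i hi α hα) _ (hmemS j hj β hβ)
      exact (h5 ▸ (⟨hsuba α hα, hsubb β hβ⟩ :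
        m ∈ inters a (x (e α i)) ∩ inters b (x (e β j))) : m ∈ (∅ : Set ℕ))
  · -- backward
    intro H x hx
    by_contra hcon
    push Not at hcon
    have hemp : ∀ i < θ.ord, ∀ j < θ.ord, inters a (x i) ∩ inters b (x j) = ∅ := hcon
    have hcardle : #(Set.Iio θ.ord × Set.Iio θ.ord) ≤ #(Set.Iio θ.ord) := by
      rw [mk_prod, Cardinal.lift_id, mk_Iio_ordinal, card_ord]
      exact (mul_eq_self (by simpa using hθ0)).le
    obtain ⟨f⟩ := hcardle
    have hκθ : θ.ord.cof.ord ≤ θ.ord := ord_le_ord.2 hsing.le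
    let S : Ordinal.{0} → Set Ordinal.{0} := fun α =>
      {z | ∃ (h : α < θ.ord) (y : Set.Iio θ.ord), z = f (⟨α, h⟩, y)}
    have hSsub : ∀ α, S α ⊆ Set.Iio θ.ord := by
      rintro α z ⟨h, y, rfl⟩
      exact (f _).2
    have hXS : XSeq θ θseq a b x S := by
      refine ⟨fun α _ => hSsub α, ?_, ?_, ?_⟩
      · intro α _ β _ hne
        rw [Set.disjoint_left]
        rintro z ⟨h, y, rfl⟩ ⟨h', y', h2⟩
        have := f.injective (Subtype.ext h2)
        apply hne
        exact congrArg Subtype.val (congrArg Prod.fst this)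
      · intro α hα
        have h1 : θseq α < θ := by
          have h2 : Order.succ α < θ.ord.cof.ord := hlim.succ_lt hα
          refine (hmono α _ (Order.lt_succ α) h2).trans_le ?_
          conv_rhs => rw [← hsup]
          exact le_csSup hbdd ⟨_, h2, rfl⟩
        have h2 : #(Set.Iio θ.ord) ≤ #(S α) := by
          refine mk_le_of_injective
            (f := fun y => ⟨f (⟨α, hα.trans_le hκθ⟩, y), hα.trans_le hκθ, y, rfl⟩) ?_
          intro y y' hy
          have h4 := Subtype.ext_iff.1 hy
          have h3 := f.injective (Subtype.ext h4)
          exact congrArg Prod.snd h3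
        refine lt_of_lt_of_le ?_ h2
        rw [mk_Iio_ordinal, card_ord, Cardinal.lift_lt]
        exact h1
      · intro α _ i hi j hj
        exact hemp i (hSsub α hi) j (hSsub α hj)
    refine H x S hx hXS ⟨(fun α => ({α} : Finset Ordinal.{0})) '' Set.Iio θ.ord.cof.ord, ?_, ?_, ?_⟩
    · rintro _ ⟨α, hα, rfl⟩
      refine ⟨fun β hβ => ?_, fun β hβ γ hγ hne => ?_⟩
      · rw [Finset.mem_singleton.1 hβ]; exact hα
      · rw [Finset.mem_singleton] at hβ hγ
        exact absurd (hβ.trans hγ.symm) hne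
    · rintro _ ⟨α, hα, rfl⟩ _ ⟨β, hβ, rfl⟩ hne hQ
      obtain ⟨i, hi, j, hj, h⟩ := hQ.2 α (by simp) β (by simp) (fun h => hne (by simp [h]))
      have hi' := hSsub α hi
      have hj' := hSsub β hj
      rcases h with h | h
      · rw [hemp i hi' j hj'] at h; exact Set.not_nonempty_empty h
      · rw [inter_comm, hemp j hj' i hi'] at h; exact Set.not_nonempty_empty h
    · rw [mk_image_eq Finset.singleton_injective, mk_Iio_ordinal, card_ord]
end

section
/- Let (A,B) be a (θ,θ) pair. Then (A,B) is nice if and only if for every n ∈ ℕ, all families X_0, …, X_{n-1}, each consisting of θ-many pairwise disjoint finite subsets of θ, and all sequences S_0, …, S_{n-1} such that S_k is an X_k-sequence for each k < n, the finite product partial order Q(X_0,S_0) × ⋯ × Q(X_{n-1},S_{n-1}) is κ.c.c. -/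
open Cardinal Set

/-- A finite product of such posets is `κ.c.c.`: there is no set of pairwise
incompatible tuples (compatibility taken coordinatewise) of cardinality `κ`. -/
def KCCn (κ : Cardinal.{0}) (n : ℕ) (Q : Fin n → Set (Finset Ordinal.{0})) : Prop :=
  ¬ ∃ A : Set (Fin n → Finset Ordinal.{0}),
      (∀ p ∈ A, ∀ k, p k ∈ Q k) ∧
      (∀ p ∈ A, ∀ q ∈ A, p ≠ q → ¬ ∀ k, p k ∪ q k ∈ Q k) ∧
      #A = Cardinal.lift.{1,0} κ

section helpers

theorem key_root {E : Type 1} [DecidableEq E] (c : Cardinal.{1}) (hc : c.IsRegular)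
    (hc0 : ℵ₀ < c) (A : Set (Finset E)) (hA : c ≤ #A) :
    ∃ r : Finset E, ∀ T : Set E, #T < c →
      ∃ p ∈ A, r ⊂ p ∧ ∀ e ∈ p, e ∈ T → e ∈ r := by
  obtain ⟨m, hm⟩ : ∃ m : ULift.{1} ℕ, c ≤ #{p | p ∈ A ∧ p.card = m.down} := by
    by_contra h
    push Not at h
    have h1 : #(⋃ m : ULift.{1} ℕ, {p | p ∈ A ∧ p.card = m.down}) < c :=
      (card_iUnion_lt_iff_forall_of_isRegular hc (by simpa using hc0)).2 h
    refine absurd (hA.trans (mk_le_mk_of_subset ?_)) h1.not_ge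
    intro p hp
    exact mem_iUnion.2 ⟨⟨p.card⟩, hp, rfl⟩
  set B : Set (Finset E) := {p | p ∈ A ∧ p.card = m.down} with hB
  let N : Set ℕ := {k | ∃ r : Finset E, r.card = k ∧ c ≤ #{p | p ∈ B ∧ r ⊆ p}}
  have hN0 : N.Nonempty := ⟨0, ∅, rfl, by simpa using hm⟩
  have hNb : BddAbove N := by
    refine ⟨m.down, ?_⟩
    rintro k ⟨r, rfl, hr⟩
    have : ({p | p ∈ B ∧ r ⊆ p} : Set (Finset E)).Nonempty := by
      rw [← nonempty_coe_sort, ← mk_ne_zero_iff]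
      exact (hc.pos.trans_le hr).ne'
    obtain ⟨p, hp, hrp⟩ := this
    rw [← hp.2]
    exact Finset.card_le_card hrp
  obtain ⟨r, hrk, hr⟩ := Nat.sSup_mem hN0 hNb
  refine ⟨r, fun T hT => ?_⟩
  by_contra h
  push Not at h
  have h1 : #(⋃ e ∈ T \ (r : Set E), {p | p ∈ B ∧ insert e r ⊆ p}) < c := by
    refine (card_biUnion_lt_iff_forall_of_isRegular hc
      ((mk_le_mk_of_subset sdiff_subset).trans_lt hT)).2 ?_
    intro e he
    by_contra hge
    have : (insert e r).card ∈ N := ⟨insert e r, rfl, not_lt.1 hge⟩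
    have h2 := le_csSup hNb this
    rw [Finset.card_insert_of_notMem (by simpa using he.2)] at h2
    omega
  have h2 : {p | p ∈ B ∧ r ⊆ p} ⊆
      {r} ∪ ⋃ e ∈ T \ (r : Set E), {p | p ∈ B ∧ insert e r ⊆ p} := by
    rintro p ⟨hpB, hrp⟩
    by_cases hpr : p = r
    · left; exact hpr
    · right
      obtain ⟨e, hep, heT, her⟩ := h p hpB.1 (lt_of_le_of_ne hrp (Ne.symm hpr))
      simp only [mem_iUnion]
      exact ⟨e, ⟨heT, by simpa using her⟩, hpB, Finset.insert_subset hep hrp⟩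
  refine absurd (hr.trans ((mk_le_mk_of_subset h2).trans (mk_union_le _ _))) (not_le.2 ?_)
  refine add_lt_of_lt hc.aleph0_le ?_ h1
  rw [mk_singleton]
  exact one_lt_aleph0.trans hc0

theorem disj_rec (θ : Cardinal.{0}) (hθ : ℵ₀ < θ) (Y : Set (Set Ordinal.{0}))
    (hfin : ∀ y ∈ Y, y.Finite)
    (hY : ∀ U : Set Ordinal.{0}, #U < Cardinal.lift.{1,0} θ → ∃ y ∈ Y, Disjoint y U) :
    ∃ f : Ordinal.{0} → Set Ordinal.{0}, (∀ ξ, f ξ ∈ Y) ∧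
      ∀ ξ < θ.ord, ∀ η < θ.ord, ξ ≠ η → Disjoint (f ξ) (f η) := by
  have hg : ∀ U : Set Ordinal.{0}, ∃ y ∈ Y, #U < Cardinal.lift.{1,0} θ → Disjoint y U := by
    intro U
    by_cases h : #U < Cardinal.lift.{1,0} θ
    · obtain ⟨y, hy, hd⟩ := hY U h
      exact ⟨y, hy, fun _ => hd⟩
    · obtain ⟨y, hy, hd⟩ := hY ∅ (by simpa using (aleph0_pos.trans hθ))
      exact ⟨y, hy, fun h' => absurd h' h⟩
  choose g hgY hgd using hg
  let f : Ordinal.{0} → Set Ordinal.{0} :=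
    (wellFounded_lt (α := Ordinal.{0})).fix (fun ξ ih => g (⋃ η, ⋃ h : η < ξ, ih η h))
  have hf : ∀ ξ, f ξ = g (⋃ η, ⋃ _ : η < ξ, f η) := fun ξ =>
    (wellFounded_lt (α := Ordinal.{0})).fix_eq _ ξ
  have hfY : ∀ ξ, f ξ ∈ Y := fun ξ => by rw [hf]; exact hgY _
  have hcard : ∀ ξ < θ.ord, #(⋃ η, ⋃ _ : η < ξ, f η : Set Ordinal.{0}) < Cardinal.lift.{1,0} θ := by
    intro ξ hξ
    have h1 : #(⋃ η ∈ Iio ξ, f η : Set Ordinal.{0}) ≤ #(Iio ξ) * ℵ₀ := by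
      refine (mk_biUnion_le f (Iio ξ)).trans ?_
      gcongr
      refine ciSup_le' fun η => ?_
      exact (lt_aleph0_iff_set_finite.2 (hfin _ (hfY _))).le
    refine lt_of_le_of_lt h1 ?_
    refine mul_lt_of_lt ?_ ?_ ?_
    · simpa using hθ.le
    · rw [mk_Iio_ordinal, lift_lt]
      exact lt_ord.1 hξ
    · simpa using hθ
  have hlt : ∀ ξ < θ.ord, ∀ η < ξ, Disjoint (f ξ) (f η) := by
    intro ξ hξ η hη
    have := hgd _ (hcard ξ hξ)
    rw [← hf] at this
    refine this.mono_right ?_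
    exact subset_iUnion₂_of_subset η hη subset_rfl
  refine ⟨f, hfY, fun ξ hξ η hη hne => ?_⟩
  rcases lt_or_gt_of_ne hne with h | h
  · exact (hlt η hη ξ h).symm
  · exact hlt ξ hξ η h

theorem inters_anti (a : Ordinal.{0} → Set ℕ) {x y : Set Ordinal.{0}} (h : x ⊆ y) :
    inters a y ⊆ inters a x := biInter_subset_biInter_left h

theorem nice_of_kcc (θ : Cardinal.{0}) (θseq : Ordinal.{0} → Cardinal.{0})
    (a b : Ordinal.{0} → Set ℕ)
    (hκ : ℵ₀ < θ.ord.cof) (hsing : θ.ord.cof < θ)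
    (hmono : ∀ α β : Ordinal, α < β → β < θ.ord.cof.ord → θseq α < θseq β)
    (hsup : sSup (θseq '' Set.Iio θ.ord.cof.ord) = θ)
    (H : ∀ (n : ℕ) (x S : Fin n → Ordinal.{0} → Set Ordinal.{0}),
        (∀ k, DisjFinFam θ (x k)) → (∀ k, XSeq θ θseq a b (x k) (S k)) →
        KCCn θ.ord.cof n (fun k => QSet θ a b (x k) (S k))) : IsNice θ a b := by
  intro x hx
  by_contra hno
  push Not at hno
  have hseq : ∀ α < θ.ord.cof.ord, θseq α < θ := by
    intro α hα
    have hs : Order.succ α < θ.ord.cof.ord :=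
      (isSuccLimit_ord hκ.le).succ_lt hα
    refine (hmono α _ (Order.lt_succ α) hs).trans_le ?_
    calc θseq (Order.succ α) ≤ sSup (θseq '' Set.Iio θ.ord.cof.ord) :=
          le_csSup bddAbove_of_small ⟨_, hs, rfl⟩
      _ = θ := hsup
  have hθ : ℵ₀ ≤ θ := (hκ.trans hsing).le
  have hemb : #(Iio θ.ord.cof.ord × Iio θ.ord) ≤ #(Iio θ.ord) := by
    rw [mk_prod]
    simp only [mk_Iio_ordinal, lift_id, card_ord]
    rw [← lift_mul, lift_le]
    exact mul_le_of_le hθ hsing.le le_rfl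
  obtain ⟨g⟩ := hemb
  let S : Ordinal.{0} → Set Ordinal.{0} := fun α => {z | ∃ q, q.1.1 = α ∧ (g q).1 = z}
  have hS : XSeq θ θseq a b x S := by
    have hsub : ∀ α < θ.ord.cof.ord, S α ⊆ Set.Iio θ.ord := by
      rintro α hα z ⟨q, -, rfl⟩
      exact (g q).2
    refine ⟨hsub, ?_, ?_, ?_⟩
    · intro α _ β _ hne
      rw [Set.disjoint_left]
      rintro z ⟨q, rfl, rfl⟩ ⟨q', rfl, h⟩
      exact hne (by rw [g.injective (Subtype.ext h)])
    · intro α hα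
      have h1 : Cardinal.lift.{1,0} θ ≤ #(S α) := by
        have : #(Iio θ.ord) = Cardinal.lift.{1,0} θ := by
          rw [mk_Iio_ordinal, card_ord]
        rw [← this]
        refine mk_le_of_injective (f := fun η => ⟨(g (⟨α, hα⟩, η)).1, _, rfl, rfl⟩) ?_
        intro η η' h
        have h' : (g (⟨α, hα⟩, η)).1 = (g (⟨α, hα⟩, η')).1 :=
          congrArg (fun z : S α => z.1) h
        have := g.injective (Subtype.ext h')
        simpa using this
      exact (lift_lt.2 (hseq α hα)).trans_le h1
    · intro α hα i hi j hj
      exact hno i (hsub α hα hi) j (hsub α hα hj)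
  refine H 1 (fun _ => x) (fun _ => S) (fun _ => hx) (fun _ => hS) ?_
  refine ⟨(fun α _ => {α}) '' Iio θ.ord.cof.ord, ?_, ?_, ?_⟩
  · rintro _ ⟨α, hα, rfl⟩ k
    refine ⟨by simpa using hα, ?_⟩
    intro β hβ γ hγ hne
    simp only [Finset.mem_singleton] at hβ hγ
    exact absurd (hβ.trans hγ.symm) hne
  · rintro _ ⟨α, hα, rfl⟩ _ ⟨β, hβ, rfl⟩ hne hall
    have hne' : α ≠ β := by rintro rfl; exact hne rfl
    obtain ⟨i, hi, j, hj, h⟩ := (hall 0).2 α (by simp) β (by simp) hne'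
    have hi' := hS.1 α hα hi
    have hj' := hS.1 β hβ hj
    rcases h with h | h
    · exact h.ne_empty (hno i hi' j hj')
    · rw [inter_comm] at h
      exact h.ne_empty (hno j hj' i hi')
  · rw [mk_image_eq, mk_Iio_ordinal, card_ord]
    intro α β h
    simpa using congrFun h 0

theorem kcc_of_nice (θ : Cardinal.{0}) (θseq : Ordinal.{0} → Cardinal.{0})
    (a b : Ordinal.{0} → Set ℕ)
    (hκ : ℵ₀ < θ.ord.cof) (hsing : θ.ord.cof < θ)
    (hmono : ∀ α β : Ordinal, α < β → β < θ.ord.cof.ord → θseq α < θseq β)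
    (hsup : sSup (θseq '' Set.Iio θ.ord.cof.ord) = θ)
    (hnice : IsNice θ a b)
    (n : ℕ) (x S : Fin n → Ordinal.{0} → Set Ordinal.{0})
    (hx : ∀ k, DisjFinFam θ (x k)) (hS : ∀ k, XSeq θ θseq a b (x k) (S k)) :
    KCCn θ.ord.cof n (fun k => QSet θ a b (x k) (S k)) := by
  rintro ⟨A, hAQ, hAinc, hAcard⟩
  have hθ : ℵ₀ < θ := hκ.trans hsing
  have hreg : θ.ord.cof.IsRegular := isRegular_cof (isSuccLimit_ord hθ.le)
  let enc : (Fin n → Finset Ordinal.{0}) → Finset (Σ _ : Fin n, Ordinal.{0}) :=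
    fun p => Finset.univ.sigma p
  have henc : ∀ p k α, (⟨k, α⟩ : Σ _ : Fin n, Ordinal.{0}) ∈ enc p ↔ α ∈ p k := by
    intro p k α; simp [enc]
  have hinj : Function.Injective enc := by
    intro p q h
    funext k
    ext α
    rw [← henc, h, henc]
  obtain ⟨r, hr⟩ := key_root (Cardinal.lift.{1,0} θ.ord.cof) hreg.lift
    (aleph0_lt_lift.2 hκ) (enc '' A) (by rw [mk_image_eq hinj, hAcard])
  let Y : Set (Set Ordinal.{0}) := {y | ∃ p ∈ A, r ⊂ enc p ∧
    ∃ i : Fin n → Ordinal.{0} → Ordinal.{0},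
      (∀ k, ∀ α ∈ p k, (⟨k, α⟩ : Σ _ : Fin n, Ordinal.{0}) ∉ r → i k α ∈ S k α) ∧
      y = ⋃ e ∈ {e | e ∈ enc p ∧ e ∉ r}, x e.1 (i e.1 e.2)}
  have hlt : ∀ p ∈ A, ∀ k, ∀ α ∈ p k, α < θ.ord.cof.ord :=
    fun p hp k α hα => (hAQ p hp k).1 α hα
  have hY1 : ∀ y ∈ Y, y.Finite ∧ y ⊆ Iio θ.ord := by
    rintro y ⟨p, hp, hrp, i, hi, rfl⟩
    have hmem : ∀ e : Σ _ : Fin n, Ordinal.{0}, e ∈ enc p → e ∉ r → i e.1 e.2 < θ.ord := by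
      rintro ⟨k, α⟩ he her
      rw [henc] at he
      exact (hS k).1 α (hlt p hp k α he) (hi k α he her)
    constructor
    · refine Set.Finite.biUnion ((enc p).finite_toSet.subset fun e he => he.1) ?_
      rintro e ⟨he, her⟩
      exact ((hx e.1).1 _ (hmem e he her)).1
    · refine iUnion₂_subset ?_
      rintro e ⟨he, her⟩
      exact ((hx e.1).1 _ (hmem e he her)).2
  have hY2 : ∀ y ∈ Y, ∀ y' ∈ Y, inters a y ∩ inters b y' = ∅ := by
    rintro y ⟨p, hp, hrp, i, hi, rfl⟩ y' ⟨p', hp', hrp', i', hi', rfl⟩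
    have red : ∀ k α β, α ∈ p k → (⟨k, α⟩ : Σ _ : Fin n, Ordinal.{0}) ∉ r →
        β ∈ p' k → (⟨k, β⟩ : Σ _ : Fin n, Ordinal.{0}) ∉ r →
        inters a (x k (i k α)) ∩ inters b (x k (i' k β)) = ∅ →
        inters a (⋃ e ∈ {e | e ∈ enc p ∧ e ∉ r}, x e.1 (i e.1 e.2)) ∩
        inters b (⋃ e ∈ {e | e ∈ enc p' ∧ e ∉ r}, x e.1 (i' e.1 e.2)) = ∅ := by
      intro k α β hα hαr hβ hβr h
      rw [← subset_empty_iff, ← h]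
      refine inter_subset_inter (inters_anti a ?_) (inters_anti b ?_)
      · exact subset_biUnion_of_mem (u := fun e : Σ _ : Fin n, Ordinal.{0} => x e.1 (i e.1 e.2))
          (x := ⟨k, α⟩) ⟨(henc _ _ _).2 hα, hαr⟩
      · exact subset_biUnion_of_mem (u := fun e : Σ _ : Fin n, Ordinal.{0} => x e.1 (i' e.1 e.2))
          (x := ⟨k, β⟩) ⟨(henc _ _ _).2 hβ, hβr⟩
    by_cases hpp : p = p'
    · subst hpp
      obtain ⟨⟨k, α⟩, he, her⟩ := Finset.exists_of_ssubset hrp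
      rw [henc] at he
      exact red k α α he her he her
        ((hS k).2.2.2 α (hlt p hp k α he) _ (hi k α he her) _ (hi' k α he her))
    · have h1 := hAinc p hp p' hp' hpp
      push Not at h1
      obtain ⟨k, hk⟩ := h1
      have hrk : ∀ α, (⟨k, α⟩ : Σ _ : Fin n, Ordinal.{0}) ∈ r → α ∈ p k ∧ α ∈ p' k := fun α h =>
        ⟨(henc _ _ _).1 (hrp.1 h), (henc _ _ _).1 (hrp'.1 h)⟩
      have h2 : ∃ α ∈ p k ∪ p' k, ∃ β ∈ p k ∪ p' k, α ≠ β ∧ ∀ i ∈ S k α, ∀ j ∈ S k β,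
          ¬ ((inters a (x k i) ∩ inters b (x k j)).Nonempty ∨
            (inters b (x k i) ∩ inters a (x k j)).Nonempty) := by
        by_contra hcon
        push Not at hcon
        refine hk ⟨?_, ?_⟩
        · intro α hα
          rcases Finset.mem_union.1 hα with h | h
          · exact hlt p hp k α h
          · exact hlt p' hp' k α h
        · intro α hα β hβ hne
          obtain ⟨i, hi, j, hj, h⟩ := hcon α hα β hβ hne
          exact ⟨i, hi, j, hj, h⟩
      obtain ⟨α, hα, β, hβ, hne, hemp⟩ := h2
      have hnp : ¬ (α ∈ p k ∧ β ∈ p k) := by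
        rintro ⟨h, h'⟩
        obtain ⟨i, hi, j, hj, h⟩ := (hAQ p hp k).2 α h β h' hne
        exact hemp i hi j hj h
      have hnp' : ¬ (α ∈ p' k ∧ β ∈ p' k) := by
        rintro ⟨h, h'⟩
        obtain ⟨i, hi, j, hj, h⟩ := (hAQ p' hp' k).2 α h β h' hne
        exact hemp i hi j hj h
      rw [Finset.mem_union] at hα hβ
      have hαr : (⟨k, α⟩ : Σ _ : Fin n, Ordinal.{0}) ∉ r := fun h => by
        have := hrk α h; tauto
      have hβr : (⟨k, β⟩ : Σ _ : Fin n, Ordinal.{0}) ∉ r := fun h => by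
        have := hrk β h; tauto
      by_cases hαp : α ∈ p k
      · have hβp' : β ∈ p' k := by tauto
        refine red k α β hαp hαr hβp' hβr ?_
        have := hemp _ (hi k α hαp hαr) _ (hi' k β hβp' hβr)
        rw [← not_nonempty_iff_eq_empty]
        tauto
      · have hαp' : α ∈ p' k := by tauto
        have hβp : β ∈ p k := by tauto
        refine red k β α hβp hβr hαp' hαr ?_
        have := hemp _ (hi' k α hαp' hαr) _ (hi k β hβp hβr)
        rw [← not_nonempty_iff_eq_empty, inter_comm]
        tauto
  have hY3 : ∀ U : Set Ordinal.{0}, #U < Cardinal.lift.{1,0} θ → ∃ y ∈ Y, Disjoint y U := by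
    intro U hU
    obtain ⟨u, hu⟩ := mem_range_lift_of_le hU.le
    rw [← hu, lift_lt, ← hsup] at hU
    obtain ⟨_, ⟨τ, hτ, rfl⟩, huτ⟩ := exists_lt_of_lt_csSup
      (Set.Nonempty.image _ ⟨0, hreg.ord_pos⟩) hU
    have hT : #{e : Σ _ : Fin n, Ordinal.{0} | e.2 < τ} < Cardinal.lift.{1,0} θ.ord.cof := by
      have h1 : #{e : Σ _ : Fin n, Ordinal.{0} | e.2 < τ} ≤ #(ULift.{1} (Fin n) × Iio τ) := by
        refine mk_le_of_injective (f := fun e => (⟨e.1.1⟩, ⟨e.1.2, e.2⟩)) ?_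
        rintro ⟨⟨k, α⟩, h⟩ ⟨⟨k', α'⟩, h'⟩ heq
        simp only [Prod.mk.injEq, ULift.up.injEq] at heq
        obtain ⟨rfl, h2⟩ := heq
        have h3 : α = α' := congrArg (fun z : Iio τ => z.1) h2
        subst h3
        rfl
      refine h1.trans_lt ?_
      rw [mk_prod]
      simp only [lift_id]
      refine mul_lt_of_lt hreg.lift.aleph0_le ?_ ?_
      · refine (lt_aleph0_of_finite _).trans_le hreg.lift.aleph0_le
      · rw [mk_Iio_ordinal, lift_lt]
        exact lt_ord.1 hτ
    obtain ⟨_, ⟨p, hp, rfl⟩, hrp, hpT⟩ := hr _ hT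
    have hex : ∀ k α, ∃ i, α ∈ p k → (⟨k, α⟩ : Σ _ : Fin n, Ordinal.{0}) ∉ r →
        i ∈ S k α ∧ Disjoint (x k i) U := by
      intro k α
      by_cases h : α ∈ p k ∧ (⟨k, α⟩ : Σ _ : Fin n, Ordinal.{0}) ∉ r
      · obtain ⟨hα, hαr⟩ := h
        have hτα : τ ≤ α := by
          by_contra hcon
          exact hαr (hpT _ ((henc _ _ _).2 hα) (not_le.1 hcon))
        have hακ := hlt p hp k α hα
        have hle : θseq τ ≤ θseq α := by
          rcases hτα.eq_or_lt with h | h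
          · rw [h]
          · exact (hmono _ _ h hακ).le
        have hbig : #U < #(S k α) := by
          rw [← hu]
          exact (lift_lt.2 (huτ.trans_le hle)).trans ((hS k).2.2.1 α hακ)
        by_contra hcon
        push Not at hcon
        have hw : ∀ i : S k α, ∃ z, z ∈ x k i ∧ z ∈ U := by
          intro i
          have := (hcon i).2.2 i.2
          exact Set.not_disjoint_iff.1 this
        choose w hw1 hw2 using hw
        refine hbig.not_ge (mk_le_of_injective (f := fun i => (⟨w i, hw2 i⟩ : U)) ?_)
        intro i j hij
        by_contra hne
        have hd := (hx k).2 i ((hS k).1 α hακ i.2) j ((hS k).1 α hακ j.2)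
          (fun h => hne (Subtype.ext h))
        have hwij : w i = w j := congrArg Subtype.val hij
        exact Set.disjoint_left.1 hd (hw1 i) (hwij ▸ hw1 j)
      · exact ⟨0, fun h1 h2 => absurd ⟨h1, h2⟩ h⟩
    choose i hi using hex
    refine ⟨_, ⟨p, hp, hrp, i, fun k α h1 h2 => (hi k α h1 h2).1, rfl⟩, ?_⟩
    rw [disjoint_iUnion₂_left]
    rintro ⟨k, α⟩ ⟨he, her⟩
    exact (hi k α ((henc _ _ _).1 he) her).2
  obtain ⟨f, hfY, hfd⟩ := disj_rec θ hθ Y (fun y hy => (hY1 y hy).1) hY3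
  obtain ⟨i, _, j, _, h⟩ := hnice f ⟨fun i _ => hY1 _ (hfY i), hfd⟩
  exact h.ne_empty (hY2 _ (hfY i) _ (hfY j))

end helpers

/-- `(A,B)` is nice iff every finite product
`Q(X₀,S₀) × ⋯ × Q(Xₙ₋₁,Sₙ₋₁)` is `κ.c.c.` -/
theorem statement5 (θ : Cardinal.{0}) (θseq : Ordinal.{0} → Cardinal.{0})
    (a b : Ordinal.{0} → Set ℕ)
    (hκ : ℵ₀ < θ.ord.cof) (hsing : θ.ord.cof < θ)
    (hmono : ∀ α β : Ordinal, α < β → β < θ.ord.cof.ord → θseq α < θseq β)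
    (hsup : sSup (θseq '' Set.Iio θ.ord.cof.ord) = θ)
    (h0 : θ.ord.cof < θseq 0)
    (hpair : IsPair θ a b) :
    IsNice θ a b ↔
      ∀ (n : ℕ) (x S : Fin n → Ordinal.{0} → Set Ordinal.{0}),
        (∀ k, DisjFinFam θ (x k)) → (∀ k, XSeq θ θseq a b (x k) (S k)) →
        KCCn θ.ord.cof n (fun k => QSet θ a b (x k) (S k)) := by
  exact ⟨fun h n x S hx hS => kcc_of_nice θ θseq a b hκ hsing hmono hsup h n x S hx hS,
    fun H => nice_of_kcc θ θseq a b hκ hsing hmono hsup H⟩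
end

section
/- Let (A,B) be a (θ,θ) pair, and define S̃ = ⟨S̃_α : α < κ⟩ by S̃_α = [θ_α, θ_α⁺), the interval of ordinals i with θ_α ≤ i < θ_α⁺. Then (A,B) is nice if and only if for every family X = {x_u : u < θ} of pairwise disjoint finite subsets of θ such that S̃ is an X-sequence, the partial order Q(X,S̃) is κ.c.c. -/
open Cardinal Set

universe u

theorem delta_aux_s6 {α : Type u} {c : Cardinal.{u}} (hc : c.IsRegular) (hc' : ℵ₀ < c)
    (A : Set (Finset α)) (hA : #A = c) :
    ∃ (R : Finset α) (M : Set (Finset α)), M ⊆ A ∧ c ≤ #M ∧ (∀ F ∈ M, R ⊆ F) ∧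
      ∀ F ∈ M, ∀ K ∈ M, F ≠ K → ∀ z ∈ F, z ∈ K → z ∈ R := by
  classical
  obtain ⟨n, hn⟩ : ∃ n : ℕ, c ≤ #{F | F ∈ A ∧ F.card = n} := by
    by_contra! h
    have h1 : #(⋃ n : ULift.{u} ℕ, {F | F ∈ A ∧ F.card = n.down}) < c :=
      (card_iUnion_lt_iff_forall_of_isRegular hc (by simpa using hc')).2 fun n => h n.down
    have h2 : A ⊆ ⋃ n : ULift.{u} ℕ, {F | F ∈ A ∧ F.card = n.down} := by
      intro F hF
      exact Set.mem_iUnion.2 ⟨⟨F.card⟩, hF, rfl⟩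
    exact absurd ((mk_le_mk_of_subset h2).trans_lt h1) (by rw [hA]; exact lt_irrefl _)
  set P : ℕ → Prop := fun m => ∃ R : Finset α, R.card = m ∧
    c ≤ #{F | F ∈ A ∧ F.card = n ∧ R ⊆ F} with hP
  have hP0 : P 0 := ⟨∅, rfl, by simpa using hn⟩
  have hPle : ∀ m, P m → m ≤ n := by
    rintro m ⟨R, rfl, hR⟩
    have : {F | F ∈ A ∧ F.card = n ∧ R ⊆ F}.Nonempty := by
      rw [Set.nonempty_iff_ne_empty]
      intro h
      rw [h] at hR
      simp at hR
      exact hc.ne_zero hR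
    obtain ⟨F, _, rfl, h⟩ := this
    exact Finset.card_le_card h
  obtain ⟨R, hRm, hR⟩ : P (Nat.findGreatest P n) := Nat.findGreatest_spec (Nat.zero_le n) hP0
  have hmax : ∀ z, z ∉ R → #{F | F ∈ A ∧ F.card = n ∧ insert z R ⊆ F} < c := by
    intro z hz
    by_contra! h
    have h1 : P (R.card + 1) := ⟨insert z R, Finset.card_insert_of_notMem hz, h⟩
    have := Nat.le_findGreatest (hPle _ h1) h1
    omega
  set B : Set (Finset α) := {F | F ∈ A ∧ F.card = n ∧ R ⊆ F} with hB
  obtain ⟨M, hM⟩ := zorn_subset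
    {M : Set (Finset α) | M ⊆ B ∧ ∀ F ∈ M, ∀ K ∈ M, F ≠ K → ∀ z ∈ F, z ∈ K → z ∈ R} (by
      intro C hC hch
      refine ⟨⋃₀ C, ⟨Set.sUnion_subset fun s hs => (hC hs).1, ?_⟩,
        fun s hs => Set.subset_sUnion_of_mem hs⟩
      rintro F ⟨s, hs, hF⟩ K ⟨t, ht, hK⟩ hne
      rcases hch.total hs ht with h | h
      · exact (hC ht).2 F (h hF) K hK hne
      · exact (hC hs).2 F hF K (h hK) hne)
  refine ⟨R, M, fun F hF => (hM.prop.1 hF).1, ?_, fun F hF => (hM.prop.1 hF).2.2, hM.prop.2⟩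
  by_contra! hlt
  have hU : #(⋃ K ∈ M, ((K : Set α) \ R)) < c := by
    refine (card_biUnion_lt_iff_forall_of_isRegular hc hlt).2 fun K hK => ?_
    exact (lt_aleph0_iff_set_finite.2 (K.finite_toSet.sdiff)).trans hc'
  have hV : #(⋃ z ∈ (⋃ K ∈ M, ((K : Set α) \ R)),
      {F | F ∈ A ∧ F.card = n ∧ insert z R ⊆ F}) < c := by
    refine (card_biUnion_lt_iff_forall_of_isRegular hc hU).2 fun z hz => hmax z ?_
    simp only [Set.mem_iUnion] at hz
    obtain ⟨K, hK, hz⟩ := hz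
    exact hz.2
  have hsub : B ⊆ M ∪ ⋃ z ∈ (⋃ K ∈ M, ((K : Set α) \ R)),
      {F | F ∈ A ∧ F.card = n ∧ insert z R ⊆ F} := by
    intro F hF
    by_contra hnot
    rw [Set.mem_union, not_or] at hnot
    obtain ⟨hFM, hF2⟩ := hnot
    have key : ∀ K ∈ M, ∀ z ∈ F, z ∈ K → z ∈ R := by
      intro K hK z hzF hzK
      by_contra hzR
      apply hF2
      simp only [Set.mem_iUnion]
      exact ⟨z, ⟨K, hK, hzK, hzR⟩, hF.1, hF.2.1, Finset.insert_subset hzF hF.2.2⟩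
    apply hFM
    have : insert F M ⊆ M := hM.le_of_ge (y := insert F M) ⟨Set.insert_subset hF hM.prop.1, by
      rintro G (rfl | hG) K (rfl | hK) hne z hz1 hz2
      · exact absurd rfl hne
      · exact key K hK z hz1 hz2
      · exact key G hG z hz2 hz1
      · exact hM.prop.2 G hG K hK hne z hz1 hz2⟩ (Set.subset_insert _ _)
    exact this (Set.mem_insert _ _)
  have := (mk_le_mk_of_subset hsub).trans (mk_union_le _ _)
  exact absurd (hR.trans this) (not_le.2 (add_lt_of_lt hc.aleph0_le hlt hV))

theorem ord_add_lt_succ {c : Cardinal.{0}} (hc : ℵ₀ ≤ c) {γ : Ordinal.{0}}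
    (h : γ < (Order.succ c).ord) : c.ord + γ < (Order.succ c).ord := by
  rw [lt_ord, Ordinal.card_add, card_ord]
  rw [lt_ord] at h
  exact add_lt_of_lt (hc.trans (Order.le_succ c)) (Order.lt_succ c) h

/-- with `S̃ α = [θ_α, θ_α⁺)` (ordinal interval up to the cardinal
successor of `θ_α`), the pair `(A,B)` is nice iff for every family `X` of pairwise
disjoint finite subsets of `θ` such that `S̃` is an `X`-sequence, `Q(X,S̃)` is
`κ.c.c.` -/
theorem statement6 (θ : Cardinal.{0}) (θseq : Ordinal.{0} → Cardinal.{0})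
    (a b : Ordinal.{0} → Set ℕ)
    (hκ : ℵ₀ < θ.ord.cof) (hsing : θ.ord.cof < θ)
    (hmono : ∀ α β : Ordinal, α < β → β < θ.ord.cof.ord → θseq α < θseq β)
    (hsup : sSup (θseq '' Set.Iio θ.ord.cof.ord) = θ)
    (h0 : θ.ord.cof < θseq 0)
    (hpair : IsPair θ a b)
    (Stilde : Ordinal.{0} → Set Ordinal.{0})
    (hS : Stilde = fun α => Set.Ico (θseq α).ord (Order.succ (θseq α)).ord) :
    IsNice θ a b ↔
      ∀ x : Ordinal.{0} → Set Ordinal.{0}, DisjFinFam θ x →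
        XSeq θ θseq a b x Stilde → KCC θ.ord.cof (QSet θ a b x Stilde) := by
  
  subst hS
  have hbdd : BddAbove (θseq '' Set.Iio θ.ord.cof.ord) := bddAbove_of_small
  have hle : ∀ α < θ.ord.cof.ord, θseq α ≤ θ := fun α hα => by
    rw [← hsup]; exact le_csSup hbdd ⟨α, hα, rfl⟩
  have hlim : Order.IsSuccLimit θ.ord.cof.ord := isSuccLimit_ord hκ.le
  have hsucc : ∀ α < θ.ord.cof.ord, Order.succ (θseq α) ≤ θ := fun α hα =>
    (Order.succ_le_of_lt (hmono α _ (Order.lt_succ α) (hlim.succ_lt hα))).trans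
      (hle _ (hlim.succ_lt hα))
  have hmono' : ∀ α β : Ordinal, α ≤ β → β < θ.ord.cof.ord → θseq α ≤ θseq β := by
    intro α β h hβ
    rcases h.eq_or_lt with rfl | h
    · exact le_rfl
    · exact (hmono _ _ h hβ).le
  have hinf : ∀ α < θ.ord.cof.ord, ℵ₀ ≤ θseq α := fun α hα =>
    hκ.le.trans (h0.le.trans (hmono' 0 α zero_le hα))
  constructor
  · intro hnice x hx hX ⟨A, hAQ, hanti, hcard⟩
    obtain ⟨hXs, hXd, -, hXe⟩ := hX
    have hreg : (Cardinal.lift.{1,0} θ.ord.cof).IsRegular := by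
      apply IsRegular.lift
      exact ⟨hκ.le, by rw [Ordinal.cof_ord_cof]⟩
    have hκ' : ℵ₀ < Cardinal.lift.{1,0} θ.ord.cof := aleph0_lt_lift.2 hκ
    obtain ⟨R, M, hMA, hMc, hRM, hMd⟩ := delta_aux_s6 hreg hκ' A hcard
    set M' : Set (Finset Ordinal.{0}) := M \ {R} with hM'
    have hM'c : Cardinal.lift.{1,0} θ.ord.cof ≤ #M' := by
      by_contra! h
      have h1 : M ⊆ M' ∪ {R} := by rw [hM']; simp
      have h2 := hMc.trans ((mk_le_mk_of_subset h1).trans (mk_union_le _ _))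
      exact absurd h2 (not_le.2 (add_lt_of_lt hreg.aleph0_le h
        (by rw [mk_singleton]; exact one_lt_aleph0.trans hκ')))
    have hne : ∀ F ∈ M', ∃ z ∈ F, z ∉ R := by
      rintro F ⟨hF, hFR⟩
      by_contra! h
      exact hFR (Finset.Subset.antisymm h (hRM F hF))
    have hlt : ∀ F ∈ M', ∀ α ∈ F, α < θ.ord.cof.ord := fun F hF => (hAQ (hMA hF.1)).1
    set T : Set (Finset Ordinal.{0} × Ordinal.{0}) :=
      {p | p.1 ∈ M' ∧ ∀ α ∈ p.1, α ∉ R → p.2 < (θseq α).ord} with hT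
    have hTge : ∀ α < θ.ord.cof.ord, Cardinal.lift.{1,0} (θseq α) ≤ #T := by
      intro α hα
      obtain ⟨F, hF, hFα⟩ : ∃ F ∈ M', ∀ z ∈ F, z ∉ R → α ≤ z := by
        by_contra! h
        choose! f hf using h
        have hinj : Function.Injective (fun F : M' => (⟨f F, (hf F F.2).2.2⟩ : Set.Iio α)) := by
          intro F K hFK
          have h1 : f F = f K := congrArg Subtype.val hFK
          by_contra hne'
          have := hMd F F.2.1 K K.2.1 (fun h => hne' (Subtype.ext h)) (f F) (hf F F.2).1
            (by rw [h1]; exact (hf K K.2).1)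
          exact (hf F F.2).2.1 this
        have h2 := hM'c.trans (mk_le_of_injective hinj)
        rw [mk_Iio_ordinal, Cardinal.lift_le] at h2
        exact absurd h2 (not_le.2 (lt_ord.1 hα))
      have hinj : Function.Injective (fun γ : Set.Iio (θseq α).ord =>
          (⟨(F, γ.1), hF, fun z hz hzR => lt_of_lt_of_le γ.2
            (ord_le_ord.2 (hmono' α z (hFα z hz hzR) (hlt F hF z hz)))⟩ : T)) := by
        intro γ δ h
        have := congrArg (fun t : T => t.1.2) h
        exact Subtype.ext this
      have h2 := mk_le_of_injective hinj
      rwa [mk_Iio_ordinal, card_ord] at h2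
    have hTθ : Cardinal.lift.{1,0} θ ≤ #T := by
      by_contra! h
      obtain ⟨c, hcT, hcθ⟩ := lt_lift_iff.1 h
      rw [← hsup] at hcT
      obtain ⟨_, ⟨α, hα, rfl⟩, h1⟩ := exists_lt_of_lt_csSup' hcT
      have h2 := hTge α hα
      rw [← hcθ, Cardinal.lift_le] at h2
      exact absurd h2 (not_le.2 h1)
    obtain ⟨e⟩ : Nonempty (Set.Iio θ.ord ↪ T) := by
      rw [← Cardinal.le_def, mk_Iio_ordinal, card_ord]
      exact hTθ
    have hidx : ∀ p ∈ T, ∀ α ∈ p.1, α ∉ R →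
        (θseq α).ord + p.2 ∈ Set.Ico (θseq α).ord (Order.succ (θseq α)).ord := by
      rintro p ⟨hp1, hp2⟩ α hα hαR
      refine ⟨le_self_add, ord_add_lt_succ (hinf α (hlt _ hp1 α hα)) ?_⟩
      exact (hp2 α hα hαR).trans (ord_lt_ord.2 (Order.lt_succ _))
    classical
    set Y : Finset Ordinal.{0} × Ordinal.{0} → Set Ordinal.{0} := fun p =>
      ⋃ α ∈ p.1 \ R, x ((θseq α).ord + p.2) with hY
    have hidx' : ∀ p ∈ T, ∀ α ∈ p.1, α ∉ R → (θseq α).ord + p.2 < θ.ord := fun p hp α hα hαR =>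
      hXs α (hlt _ hp.1 α hα) (hidx p hp α hα hαR)
    have hYdisj : ∀ p ∈ T, ∀ q ∈ T, p ≠ q → Disjoint (Y p) (Y q) := by
      intro p hp q hq hpq
      simp only [hY, Set.disjoint_iUnion_left, Set.disjoint_iUnion_right, Finset.mem_sdiff]
      rintro α ⟨hα, hαR⟩ β ⟨hβ, hβR⟩
      first
      | (refine hx.2 _ (hidx' _ ‹_› _ ‹_› ‹_›) _ (hidx' _ ‹_› _ ‹_› ‹_›) ?_)
      intro heq
      by_cases hαβ : α = β
      · subst hαβ
        have h1 : p.1 = q.1 := by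
          by_contra hne'
          first
          | exact hαR (hMd _ hp.1.1 _ hq.1.1 hne' α ‹_› ‹_›)
        have h2 : p.2 = q.2 := by
          have := add_left_cancel heq
          exact this
        exact hpq (Prod.ext h1 h2)
      · first
        | exact Set.disjoint_left.1 (hXd α (hlt _ hp.1 α hα) β (hlt _ hq.1 β hβ) hαβ)
            (hidx p hp α hα hαR) (heq ▸ hidx q hq β hβ hβR)
        | exact Set.disjoint_left.1 (hXd α (hlt _ hq.1 α hα) β (hlt _ hp.1 β hβ) hαβ)
            (hidx q hq α hα hαR) (heq ▸ hidx p hp β hβ hβR)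
    have hYsub : ∀ p : Finset Ordinal.{0} × Ordinal.{0}, ∀ α ∈ p.1, α ∉ R →
        x ((θseq α).ord + p.2) ⊆ Y p := by
      intro p α hα hαR
      exact Set.subset_biUnion_of_mem (u := fun α => x ((θseq α).ord + p.2))
        (Finset.mem_sdiff.2 ⟨hα, hαR⟩)
    have hanti' : ∀ (c : Ordinal.{0} → Set ℕ) (s t : Set Ordinal.{0}), s ⊆ t →
        inters c t ⊆ inters c s := fun c s t h => Set.biInter_subset_biInter_left h
    have hYempty : ∀ p ∈ T, ∀ q ∈ T, ¬ (inters a (Y p) ∩ inters b (Y q)).Nonempty := by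
      intro p hp q hq hnon
      have main : ∀ α ∈ p.1, α ∉ R → ∀ β ∈ q.1, β ∉ R →
          (inters a (x ((θseq α).ord + p.2)) ∩ inters b (x ((θseq β).ord + q.2))).Nonempty :=
        fun α hα hαR β hβ hβR => hnon.mono (Set.inter_subset_inter
          (hanti' _ _ _ (hYsub p α hα hαR)) (hanti' _ _ _ (hYsub q β hβ hβR)))
      by_cases hpq : p.1 = q.1
      · obtain ⟨α, hα, hαR⟩ := hne _ hp.1
        have h1 := main α hα hαR α (hpq ▸ hα) hαR
        rw [hXe α (hlt _ hp.1 α hα) _ (hidx p hp α hα hαR) _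
          (hidx q hq α (hpq ▸ hα) hαR)] at h1
        exact Set.not_nonempty_empty h1
      · refine hanti _ (hMA hp.1.1) _ (hMA hq.1.1) hpq ?_
        have hQp := hAQ (hMA hp.1.1)
        have hQq := hAQ (hMA hq.1.1)
        refine ⟨fun α hα => (Finset.mem_union.1 hα).elim (hQp.1 α) (hQq.1 α), ?_⟩
        have hRp := hRM _ hp.1.1
        have hRq := hRM _ hq.1.1
        intro α hα β hβ hαβ
        by_cases h1 : α ∈ p.1 ∧ β ∈ p.1
        · exact hQp.2 α h1.1 β h1.2 hαβ
        by_cases h2 : α ∈ q.1 ∧ β ∈ q.1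
        · exact hQq.2 α h2.1 β h2.2 hαβ
        have hαR : α ∉ R := fun h => by
          rcases Finset.mem_union.1 hβ with h' | h'
          · exact h1 ⟨hRp h, h'⟩
          · exact h2 ⟨hRq h, h'⟩
        have hβR : β ∉ R := fun h => by
          rcases Finset.mem_union.1 hα with h' | h'
          · exact h1 ⟨h', hRp h⟩
          · exact h2 ⟨h', hRq h⟩
        rcases Finset.mem_union.1 hα with ha | ha
        · have hb : β ∈ q.1 := (Finset.mem_union.1 hβ).resolve_left fun h => h1 ⟨ha, h⟩
          exact ⟨_, hidx p hp α ha hαR, _, hidx q hq β hb hβR, Or.inl (main α ha hαR β hb hβR)⟩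
        · have hb : β ∈ p.1 := (Finset.mem_union.1 hβ).resolve_right fun h => h2 ⟨ha, h⟩
          refine ⟨_, hidx q hq α ha hαR, _, hidx p hp β hb hβR, Or.inr ?_⟩
          rw [Set.inter_comm]
          exact main β hb hβR α ha hαR
    obtain ⟨i, hi, j, hj, hij⟩ := hnice
      (fun i => if h : i < θ.ord then Y (e ⟨i, h⟩).1 else ∅) (by
        constructor
        · intro i hi
          simp only [dif_pos hi]
          constructor
          · refine Set.Finite.biUnion (Finset.finite_toSet _) fun α hα => ?_
            obtain ⟨h1, h2⟩ := Finset.mem_sdiff.1 hα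
            exact (hx.1 _ (hidx' _ (e ⟨i, hi⟩).2 α h1 h2)).1
          · refine Set.iUnion₂_subset fun α hα => ?_
            obtain ⟨h1, h2⟩ := Finset.mem_sdiff.1 hα
            exact (hx.1 _ (hidx' _ (e ⟨i, hi⟩).2 α h1 h2)).2
        · intro i hi j hj hne'
          simp only [dif_pos hi, dif_pos hj]
          refine hYdisj _ (e ⟨i, hi⟩).2 _ (e ⟨j, hj⟩).2 fun h => hne' ?_
          exact congrArg Subtype.val (e.injective (Subtype.ext h)))
    simp only [dif_pos hi, dif_pos hj] at hij
    exact hYempty _ (e ⟨i, hi⟩).2 _ (e ⟨j, hj⟩).2 hij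
  · intro H x hx
    by_contra! hno
    have hSsub : ∀ α < θ.ord.cof.ord,
        Set.Ico (θseq α).ord (Order.succ (θseq α)).ord ⊆ Set.Iio θ.ord := fun α hα i hi =>
      lt_of_lt_of_le hi.2 (ord_le_ord.2 (hsucc α hα))
    have hdis : ∀ α β, α < β → β < θ.ord.cof.ord →
        Disjoint (Set.Ico (θseq α).ord (Order.succ (θseq α)).ord)
          (Set.Ico (θseq β).ord (Order.succ (θseq β)).ord) := by
      intro α β hαβ hβ
      rw [Set.disjoint_left]
      intro i hi hi'
      exact absurd (hi.2.trans_le (ord_le_ord.2 (Order.succ_le_of_lt (hmono α β hαβ hβ))))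
        (not_lt.2 hi'.1)
    refine H x hx ⟨hSsub, ?_, ?_, ?_⟩ ⟨(fun α => {α}) '' Set.Iio θ.ord.cof.ord, ?_, ?_, ?_⟩
    · intro α hα β hβ hne
      rcases lt_or_gt_of_ne hne with h | h
      · exact hdis α β h hβ
      · exact (hdis β α h hα).symm
    · intro α hα
      have hinj : Function.Injective (fun γ : Set.Iio (Order.succ (θseq α)).ord =>
          (⟨(θseq α).ord + γ.1, le_self_add, ord_add_lt_succ (hinf α hα) γ.2⟩ :
            Set.Ico (θseq α).ord (Order.succ (θseq α)).ord)) := by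
        intro γ δ h
        exact Subtype.ext (add_left_cancel (congrArg Subtype.val h))
      have h2 := mk_le_of_injective hinj
      rw [mk_Iio_ordinal, card_ord] at h2
      exact lt_of_lt_of_le (Cardinal.lift_lt.2 (Order.lt_succ _)) h2
    · intro α hα i hi j hj
      exact hno i (hSsub α hα hi) j (hSsub α hα hj)
    · rintro _ ⟨α, hα, rfl⟩
      refine ⟨fun β hβ => ?_, fun β hβ γ hγ hne => ?_⟩
      · rw [Finset.mem_singleton.1 hβ]; exact hα
      · exact absurd ((Finset.mem_singleton.1 hβ).trans (Finset.mem_singleton.1 hγ).symm) hne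
    · rintro _ ⟨α, hα, rfl⟩ _ ⟨β, hβ, rfl⟩ hne hQ
      have hαβ : α ≠ β := fun h => hne (by rw [h])
      obtain ⟨i, hi, j, hj, h | h⟩ := hQ.2 α (by simp) β (by simp) hαβ
      · rw [hno i (hSsub α hα hi) j (hSsub β hβ hj)] at h
        exact Set.not_nonempty_empty h
      · rw [Set.inter_comm, hno j (hSsub β hβ hj) i (hSsub α hα hi)] at h
        exact Set.not_nonempty_empty h
    · rw [mk_image_eq Finset.singleton_injective, mk_Iio_ordinal, card_ord]
end

section
/- Let (A,B) be a (θ,θ) pair, Y = {y_i : i < θ} a family of pairwise disjoint finite subsets of θ, and T a Y-sequence. If P' ⊆ P(Y,T) has cardinality κ and is closed under subsets (F ∈ P' and K ⊆ F imply K ∈ P'), then the product partial order P' × Q(Y,T) is not κ.c.c., where P' carries the ordering inherited from P(Y,T). -/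
open Cardinal Set

/-- The partial order `P(X,S)`: finite `F ⊆ κ` such that for all distinct
`α, β ∈ F`, for every `i ∈ S α` and `j ∈ S β`, `a(x_i) ∩ b(x_j) = ∅` and
`b(x_i) ∩ a(x_j) = ∅`. -/
def PPoset (θ : Cardinal.{0}) (a b : Ordinal.{0} → Set ℕ) (x S : Ordinal.{0} → Set Ordinal.{0}) :
    Set (Finset Ordinal.{0}) :=
  {F | (∀ α ∈ F, α < θ.ord.cof.ord) ∧
    ∀ α ∈ F, ∀ β ∈ F, α ≠ β → ∀ i ∈ S α, ∀ j ∈ S β,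
      inters a (x i) ∩ inters b (x j) = ∅ ∧ inters b (x i) ∩ inters a (x j) = ∅}

/-- if `P' ⊆ P(Y,T)` has cardinality `κ` and is closed under subsets,
then `P' × Q(Y,T)` is not `κ.c.c.`: it has an antichain of cardinality `κ`
(compatibility is coordinatewise, and means having a common superset in the
respective poset). -/
theorem statement8 (θ : Cardinal.{0}) (θseq : Ordinal.{0} → Cardinal.{0})
    (a b : Ordinal.{0} → Set ℕ)
    (hκ : ℵ₀ < θ.ord.cof) (hsing : θ.ord.cof < θ)
    (hmono : ∀ α β : Ordinal, α < β → β < θ.ord.cof.ord → θseq α < θseq β)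
    (hsup : sSup (θseq '' Set.Iio θ.ord.cof.ord) = θ)
    (h0 : θ.ord.cof < θseq 0)
    (hpair : IsPair θ a b)
    (y T : Ordinal.{0} → Set Ordinal.{0})
    (hfam : DisjFinFam θ y) (hseq : XSeq θ θseq a b y T)
    (P' : Set (Finset Ordinal.{0}))
    (hP' : P' ⊆ PPoset θ a b y T)
    (hcard : #P' = Cardinal.lift.{1,0} θ.ord.cof)
    (hclosed : ∀ F ∈ P', ∀ K : Finset Ordinal.{0}, K ⊆ F → K ∈ P') :
    ∃ A : Set (Finset Ordinal.{0} × Finset Ordinal.{0}),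
      (∀ p ∈ A, p.1 ∈ P' ∧ p.2 ∈ QSet θ a b y T) ∧
      (∀ p ∈ A, ∀ q ∈ A, p ≠ q →
        ¬((∃ G ∈ P', p.1 ⊆ G ∧ q.1 ⊆ G) ∧
          (∃ G ∈ QSet θ a b y T, p.2 ⊆ G ∧ q.2 ⊆ G))) ∧
      #A = Cardinal.lift.{1,0} θ.ord.cof := by
  classical
  set X : Set Ordinal.{0} := {α | {α} ∈ P'} with hX
  have hinj : Function.Injective (fun α : Ordinal.{0} => ({α} : Finset Ordinal.{0})) :=
    fun _ _ h => Finset.singleton_injective h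
  have hle : #X ≤ #P' :=
    Cardinal.mk_le_of_injective (f := fun α : X => (⟨{α.1}, α.2⟩ : P')) (by
      intro u v h
      exact Subtype.ext (hinj (congrArg Subtype.val h)))
  have hge : #P' ≤ #(Finset X) := by
    refine Cardinal.mk_le_of_injective (f := fun F : P' => F.1.subtype (· ∈ X)) ?_
    intro F G h
    have key : ∀ F ∈ P', ∀ x ∈ F, x ∈ X := fun F hF x hx =>
      hclosed F hF {x} (by simpa using hx)
    apply Subtype.ext
    have h2 := congrArg (Finset.map (Function.Embedding.subtype (· ∈ X))) h
    simp only at h2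
    rwa [Finset.subtype_map_of_mem (key F.1 F.2), Finset.subtype_map_of_mem (key G.1 G.2)] at h2
  have hP : ℵ₀ < #P' := by
    rw [hcard]
    exact Cardinal.aleph0_lt_lift.mpr hκ
  have hinf : Infinite X := by
    by_contra hfin
    rw [not_infinite_iff_finite] at hfin
    exact absurd (hge.trans (Cardinal.lt_aleph0_of_finite _).le) (not_le.mpr hP)
  have hXc : #X = #P' := by
    refine le_antisymm hle ?_
    rwa [Cardinal.mk_finset_of_infinite] at hge
  refine ⟨(fun α : Ordinal.{0} => (({α} : Finset Ordinal.{0}), ({α} : Finset Ordinal.{0}))) '' X,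
    ?_, ?_, ?_⟩
  · rintro _ ⟨α, hα, rfl⟩
    refine ⟨hα, ?_, ?_⟩
    · exact (hP' hα).1
    · intro u hu v hv huv
      exact absurd ((Finset.mem_singleton.1 hu).trans (Finset.mem_singleton.1 hv).symm) huv
  · rintro _ ⟨α, hα, rfl⟩ _ ⟨β, hβ, rfl⟩ hne ⟨⟨G, hG, h1, h2⟩, ⟨H, hH, h3, h4⟩⟩
    have hab : α ≠ β := fun h => hne (by rw [h])
    simp only [Finset.singleton_subset_iff] at h1 h2 h3 h4
    obtain ⟨i, hi, j, hj, hij⟩ := hH.2 α h3 β h4 hab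
    obtain ⟨e1, e2⟩ := (hP' hG).2 α h1 β h2 hab i hi j hj
    rcases hij with h | h
    · exact h.ne_empty e1
    · exact h.ne_empty e2
  · rw [Cardinal.mk_image_eq (fun u v h => hinj (congrArg Prod.fst h)), hXc, hcard]
end

section
/- Let (A,B) be a (θ,θ) pair and suppose X = {x_i : i < θ} is a family of θ-many pairwise disjoint nonempty finite subsets of θ such that a(x_i) ∩ b(x_j) = ∅ for all i, j < θ. Let c = ⋃_{i<θ} a(x_i). Then every family Y of pairwise disjoint nonempty finite subsets of θ that is maximal with respect to the property that a(y) ⊆ c and b(y) ∩ c = ∅ for all y ∈ Y has cardinality exactly θ, and moreover a(y) ∩ b(y') = ∅ for all y, y' ∈ Y. -/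
open Cardinal Set

/-- if `X = {x_i : i < θ}` are pairwise disjoint nonempty finite
subsets of `θ` with `a(x_i) ∩ b(x_j) = ∅` for all `i, j < θ`, and
`c = ⋃_{i<θ} a(x_i)`, then every family `Y` of pairwise disjoint nonempty finite
subsets of `θ`, maximal with respect to `a(y) ⊆ c ∧ b(y) ∩ c = ∅` for all `y ∈ Y`,
has cardinality exactly `θ`, and `a(y) ∩ b(y') = ∅` for all `y, y' ∈ Y`. -/
theorem statement10 (θ : Cardinal.{0}) (a b : Ordinal.{0} → Set ℕ)
    (hκ : ℵ₀ < θ.ord.cof) (hsing : θ.ord.cof < θ)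
    (hpair : IsPair θ a b)
    (x : Ordinal.{0} → Set Ordinal.{0})
    (hfam : DisjFinFam θ x)
    (hne : ∀ i < θ.ord, (x i).Nonempty)
    (hempty : ∀ i < θ.ord, ∀ j < θ.ord, inters a (x i) ∩ inters b (x j) = ∅)
    (c : Set ℕ) (hc : c = ⋃ i ∈ Set.Iio θ.ord, inters a (x i))
    (Y : Set (Set Ordinal.{0}))
    (hYfin : ∀ y ∈ Y, Set.Finite y ∧ y.Nonempty ∧ y ⊆ Set.Iio θ.ord)
    (hYdisj : ∀ y ∈ Y, ∀ y' ∈ Y, y ≠ y' → Disjoint y y')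
    (hYprop : ∀ y ∈ Y, inters a y ⊆ c ∧ inters b y ∩ c = ∅)
    (hmax : ∀ z : Set Ordinal.{0}, Set.Finite z → z.Nonempty → z ⊆ Set.Iio θ.ord →
      z ∉ Y → (∀ y ∈ Y, Disjoint z y) → inters a z ⊆ c → inters b z ∩ c = ∅ →
      False) :
    #Y = Cardinal.lift.{1,0} θ ∧
    ∀ y ∈ Y, ∀ y' ∈ Y, inters a y ∩ inters b y' = ∅ := by
  subst hc
  have hcard : #(Set.Iio θ.ord) = Cardinal.lift.{1,0} θ := by
    rw [Cardinal.mk_Iio_ordinal, Cardinal.card_ord]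
  have hθ : ℵ₀ < Cardinal.lift.{1,0} θ := by
    rw [← Cardinal.lift_aleph0.{1,0}, Cardinal.lift_lt]
    exact hκ.trans hsing
  refine ⟨le_antisymm ?_ ?_, ?_⟩
  · rw [← hcard]
    choose! f hf using fun y hy => (hYfin y hy).2.1
    refine Cardinal.mk_le_of_injective
      (f := fun y : Y => (⟨f y, (hYfin y y.2).2.2 (hf y y.2)⟩ : Set.Iio θ.ord)) ?_
    rintro ⟨y, hy⟩ ⟨y', hy'⟩ h
    simp only [Subtype.mk.injEq] at h
    by_contra hn
    have hd := hYdisj y hy y' hy' (fun e => hn (Subtype.ext e))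
    exact Set.disjoint_left.1 hd (hf y hy) (h ▸ hf y' hy')
  · by_contra hlt
    rw [not_le] at hlt
    have hU : #(⋃₀ Y) < Cardinal.lift.{1,0} θ := by
      refine (Cardinal.mk_sUnion_le Y).trans_lt ?_
      refine Cardinal.mul_lt_of_lt hθ.le hlt (lt_of_le_of_lt ?_ hθ)
      refine ciSup_le' fun s => ?_
      have := (hYfin s s.2).1
      exact (Cardinal.lt_aleph0_iff_set_finite.2 this).le
    have hex : ∃ i < θ.ord, Disjoint (x i) (⋃₀ Y) := by
      by_contra hno
      push Not at hno
      have h2 : ∀ i, i < θ.ord → ∃ p, p ∈ x i ∧ p ∈ ⋃₀ Y :=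
        fun i hi => Set.not_disjoint_iff.1 (hno i hi)
      choose! g hg1 hg2 using h2
      refine absurd hU (not_lt.2 ?_)
      rw [← hcard]
      refine Cardinal.mk_le_of_injective
        (f := fun i : Set.Iio θ.ord => (⟨g i, hg2 i i.2⟩ : ↥(⋃₀ Y))) ?_
      rintro ⟨i, hi⟩ ⟨j, hj⟩ h
      simp only [Subtype.mk.injEq] at h
      by_contra hn
      have hd := hfam.2 i hi j hj (fun e => hn (Subtype.ext e))
      exact Set.disjoint_left.1 hd (hg1 i hi) (h ▸ hg1 j hj)
    obtain ⟨i, hi, hdis⟩ := hex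
    refine hmax (x i) (hfam.1 i hi).1 (hne i hi) (hfam.1 i hi).2 ?_ ?_ ?_ ?_
    · intro hm
      obtain ⟨p, hp⟩ := hne i hi
      exact Set.disjoint_left.1 hdis hp ⟨x i, hm, hp⟩
    · intro y hy
      exact hdis.mono_right (Set.subset_sUnion_of_mem hy)
    · exact Set.subset_biUnion_of_mem (u := fun i => inters a (x i)) (Set.mem_Iio.2 hi)
    · rw [Set.eq_empty_iff_forall_notMem]
      rintro n ⟨hn, hnc⟩
      simp only [Set.mem_iUnion] at hnc
      obtain ⟨j, hj, hnj⟩ := hnc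
      exact Set.eq_empty_iff_forall_notMem.1 (hempty j hj i hi) n ⟨hnj, hn⟩
  · intro y hy y' hy'
    rw [Set.eq_empty_iff_forall_notMem]
    rintro n ⟨hn, hn'⟩
    exact Set.eq_empty_iff_forall_notMem.1 (hYprop y' hy').2 n ⟨hn', (hYprop y hy).1 hn⟩
end

section
/- Let {p_i : i < θ} be a family of conditions in 𝒫 and let {y_i : i < θ} be a family of pairwise disjoint finite subsets of θ with y_i ⊆ s_{p_i} for every i < θ. Then there exist i ≠ j < θ, a condition q ∈ 𝒫 with q ≤ p_i and q ≤ p_j, and a natural number n < n_q such that ⟨n,ξ⟩ ∈ a_q for every ξ ∈ y_i and ⟨n,η⟩ ∈ b_q for every η ∈ y_j. -/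
open Cardinal Set

/-- A condition `p = ⟨n_p, s_p, a_p, b_p, Z_p, ⟨c_p^z : z ∈ Z_p⟩⟩` of the partial
order `𝒫`. -/
structure PCond (θ : Cardinal.{0}) where
  /-- `n_p ∈ ω` -/
  n : ℕ
  /-- `s_p`, a finite subset of `θ` -/
  s : Set Ordinal.{0}
  /-- `a_p ⊆ n_p × s_p` -/
  a : Set (ℕ × Ordinal.{0})
  /-- `b_p ⊆ n_p × s_p` -/
  b : Set (ℕ × Ordinal.{0})
  /-- `Z_p`, a finite set of subsets of `θ`, each of cardinality `≤ ℵ₁` -/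
  Z : Set (Set Ordinal.{0})
  /-- `⟨c_p^z : z ∈ Z_p⟩` with `c_p^z ⊆ n_p` -/
  c : Set Ordinal.{0} → Set ℕ
  s_fin : s.Finite
  s_sub : s ⊆ Set.Iio θ.ord
  a_sub : a ⊆ Set.Iio n ×ˢ s
  b_sub : b ⊆ Set.Iio n ×ˢ s
  ab_disj : a ∩ b = ∅
  Z_fin : Z.Finite
  Z_sub : ∀ z ∈ Z, z ⊆ Set.Iio θ.ord ∧ #z ≤ Cardinal.aleph 1
  c_sub : ∀ z ∈ Z, c z ⊆ Set.Iio n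

/-- The ordering of `𝒫`:  `q ≤ p` iff conditions (1)–(5) hold. -/
def PLe (θ : Cardinal.{0}) (q p : PCond θ) : Prop :=
  (p.s ⊆ q.s ∧ p.n ≤ q.n ∧ p.Z ⊆ q.Z) ∧
  (q.a ∩ Set.Iio p.n ×ˢ p.s = p.a ∧ q.b ∩ Set.Iio p.n ×ˢ p.s = p.b) ∧
  (∀ z ∈ p.Z, q.c z ∩ Set.Iio p.n = p.c z) ∧
  (∀ ξ ∈ p.s, ∀ η ∈ p.s, ∀ l : ℕ, p.n ≤ l → l < q.n →
    (l, ξ) ∈ q.a → (l, η) ∉ q.b) ∧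
  (∀ z ∈ p.Z, ∀ ξ ∈ z ∩ p.s, ∀ l : ℕ, p.n ≤ l → l < q.n →
    ((l, ξ) ∈ q.a → l ∈ q.c z) ∧ ((l, ξ) ∈ q.b → l ∉ q.c z))

theorem amalg_aux (θ : Cardinal.{0}) (p r : PCond θ) (y w : Set Ordinal.{0})
    (hn : p.n = r.n)
    (ha : ∀ l ξ, ξ ∈ p.s → ξ ∈ r.s → ((l, ξ) ∈ p.a ↔ (l, ξ) ∈ r.a))
    (hb : ∀ l ξ, ξ ∈ p.s → ξ ∈ r.s → ((l, ξ) ∈ p.b ↔ (l, ξ) ∈ r.b))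
    (hc : ∀ z l, z ∈ p.Z → z ∈ r.Z → (l ∈ p.c z ↔ l ∈ r.c z))
    (hy : y ⊆ p.s) (hw : w ⊆ r.s)
    (hyr : ∀ ξ ∈ y, ξ ∉ r.s) (hwp : ∀ ξ ∈ w, ξ ∉ p.s)
    (hz : ∀ z, z ∈ p.Z → z ∈ r.Z → ∀ ξ ∈ y, ξ ∉ z) :
    ∃ q : PCond θ, PLe θ q p ∧ PLe θ q r ∧
        ∃ n < q.n, (∀ ξ ∈ y, (n, ξ) ∈ q.a) ∧ ∀ η ∈ w, (n, η) ∈ q.b := by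
  have pa : ∀ l ξ, (l, ξ) ∈ p.a → l < p.n ∧ ξ ∈ p.s := fun l ξ h => by simpa using p.a_sub h
  have pb : ∀ l ξ, (l, ξ) ∈ p.b → l < p.n ∧ ξ ∈ p.s := fun l ξ h => by simpa using p.b_sub h
  have ra : ∀ l ξ, (l, ξ) ∈ r.a → l < p.n ∧ ξ ∈ r.s := fun l ξ h => by
    rw [hn]; simpa using r.a_sub h
  have rb : ∀ l ξ, (l, ξ) ∈ r.b → l < p.n ∧ ξ ∈ r.s := fun l ξ h => by
    rw [hn]; simpa using r.b_sub h
  have pc : ∀ z l, z ∈ p.Z → l ∈ p.c z → l < p.n := fun z l h h' => by simpa using p.c_sub z h h'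
  have rc : ∀ z l, z ∈ r.Z → l ∈ r.c z → l < p.n := fun z l h h' => by
    rw [hn]; simpa using r.c_sub z h h'
  have pab : ∀ l ξ, (l, ξ) ∈ p.a → (l, ξ) ∉ p.b := fun l ξ h h' => by
    have : (l, ξ) ∈ p.a ∩ p.b := ⟨h, h'⟩
    simp [p.ab_disj] at this
  have rab : ∀ l ξ, (l, ξ) ∈ r.a → (l, ξ) ∉ r.b := fun l ξ h h' => by
    have : (l, ξ) ∈ r.a ∩ r.b := ⟨h, h'⟩
    simp [r.ab_disj] at this
  let qa : Set (ℕ × Ordinal.{0}) :=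
    {x | (x.1, x.2) ∈ p.a ∨ (x.1, x.2) ∈ r.a ∨ (x.1 = p.n ∧ x.2 ∈ y)}
  let qb : Set (ℕ × Ordinal.{0}) :=
    {x | (x.1, x.2) ∈ p.b ∨ (x.1, x.2) ∈ r.b ∨ (x.1 = p.n ∧ x.2 ∈ w)}
  let qc : Set Ordinal.{0} → Set ℕ := fun z =>
    {l | (z ∈ p.Z ∧ l ∈ p.c z) ∨ (z ∈ r.Z ∧ l ∈ r.c z) ∨
      (l = p.n ∧ z ∈ p.Z ∧ ∃ ξ ∈ y, ξ ∈ z)}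
  have mqa : ∀ l ξ, (l, ξ) ∈ qa ↔ ((l, ξ) ∈ p.a ∨ (l, ξ) ∈ r.a ∨ (l = p.n ∧ ξ ∈ y)) :=
    fun _ _ => Iff.rfl
  have mqb : ∀ l ξ, (l, ξ) ∈ qb ↔ ((l, ξ) ∈ p.b ∨ (l, ξ) ∈ r.b ∨ (l = p.n ∧ ξ ∈ w)) :=
    fun _ _ => Iff.rfl
  have mqc : ∀ z l, l ∈ qc z ↔ ((z ∈ p.Z ∧ l ∈ p.c z) ∨ (z ∈ r.Z ∧ l ∈ r.c z) ∨
      (l = p.n ∧ z ∈ p.Z ∧ ∃ ξ ∈ y, ξ ∈ z)) := fun _ _ => Iff.rfl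
  clear_value qa qb qc
  have hy' : ∀ ξ ∈ y, ξ ∈ p.s := fun ξ h => hy h
  have hw' : ∀ ξ ∈ w, ξ ∈ r.s := fun ξ h => hw h
  let q : PCond θ :=
    { n := p.n + 1
      s := p.s ∪ r.s
      a := qa
      b := qb
      Z := p.Z ∪ r.Z
      c := qc
      s_fin := p.s_fin.union r.s_fin
      s_sub := union_subset p.s_sub r.s_sub
      a_sub := by
        rintro ⟨l, ξ⟩ h
        simp only [mem_prod, mem_Iio, mem_union]
        grind
      b_sub := by
        rintro ⟨l, ξ⟩ h
        simp only [mem_prod, mem_Iio, mem_union]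
        grind
      ab_disj := by
        ext ⟨l, ξ⟩
        simp only [mem_inter_iff, mqa, mqb, mem_empty_iff_false, iff_false]
        grind
      Z_fin := p.Z_fin.union r.Z_fin
      Z_sub := by
        rintro z (h | h)
        · exact p.Z_sub z h
        · exact r.Z_sub z h
      c_sub := by
        intro z _ l h
        simp only [mem_Iio]
        grind }
  refine ⟨q, ⟨⟨subset_union_left, Nat.le_succ _, subset_union_left⟩, ⟨?_, ?_⟩, ?_, ?_, ?_⟩,
    ⟨⟨subset_union_right, hn ▸ Nat.le_succ _, subset_union_right⟩, ⟨?_, ?_⟩, ?_, ?_, ?_⟩,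
    p.n, Nat.lt_succ_self _, fun ξ h => (mqa _ _).2 (Or.inr (Or.inr ⟨rfl, h⟩)),
      fun ξ h => (mqb _ _).2 (Or.inr (Or.inr ⟨rfl, h⟩))⟩
  · ext ⟨l, ξ⟩
    change ((l, ξ) ∈ qa ∧ (l < p.n ∧ ξ ∈ p.s)) ↔ _
    grind
  · ext ⟨l, ξ⟩
    change ((l, ξ) ∈ qb ∧ (l < p.n ∧ ξ ∈ p.s)) ↔ _
    grind
  · intro z h
    ext l
    change (l ∈ qc z ∧ l < p.n) ↔ _
    grind
  · intro ξ h1 η h2 l h3 h4 h5 h6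
    change (l, ξ) ∈ qa at h5
    change (l, η) ∈ qb at h6
    change l < p.n + 1 at h4
    grind
  · rintro z h ξ ⟨h1, h2⟩ l h3 h4
    change l < p.n + 1 at h4
    change ((l, ξ) ∈ qa → l ∈ qc z) ∧ ((l, ξ) ∈ qb → l ∉ qc z)
    grind
  · ext ⟨l, ξ⟩
    change ((l, ξ) ∈ qa ∧ (l < r.n ∧ ξ ∈ r.s)) ↔ _
    grind
  · ext ⟨l, ξ⟩
    change ((l, ξ) ∈ qb ∧ (l < r.n ∧ ξ ∈ r.s)) ↔ _
    grind
  · intro z h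
    ext l
    change (l ∈ qc z ∧ l < r.n) ↔ _
    grind
  · intro ξ h1 η h2 l h3 h4 h5 h6
    change (l, ξ) ∈ qa at h5
    change (l, η) ∈ qb at h6
    change l < p.n + 1 at h4
    grind
  · rintro z h ξ ⟨h1, h2⟩ l h3 h4
    change l < p.n + 1 at h4
    change ((l, ξ) ∈ qa → l ∈ qc z) ∧ ((l, ξ) ∈ qb → l ∉ qc z)
    grind

theorem delta_uniform_aux {ι α : Type 1} [DecidableEq α] (μ : Cardinal.{1}) (hμ : ℵ₀ ≤ μ) (k : ℕ) :
    ∀ (A : ι → Finset α) (I : Set ι), μ < #I → (∀ i ∈ I, (A i).card = k) →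
      ∃ J ⊆ I, μ < #J ∧ ∃ R : Finset α, ∀ i ∈ J, ∀ j ∈ J, i ≠ j → A i ∩ A j = R := by
  induction k with
  | zero =>
    intro A I hI h
    refine ⟨I, Subset.rfl, hI, ∅, fun i hi j hj _ => ?_⟩
    simp [Finset.card_eq_zero.1 (h i hi)]
  | succ k ih =>
    intro A I hI h
    by_cases hx : ∃ x, μ < #{i | i ∈ I ∧ x ∈ A i}
    · obtain ⟨x, hx⟩ := hx
      obtain ⟨J, hJ, hJc, R, hR⟩ := ih (fun i => (A i).erase x) {i | i ∈ I ∧ x ∈ A i} hx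
        (fun i hi => by rw [Finset.card_erase_of_mem hi.2, h i hi.1]; rfl)
      refine ⟨J, fun i hi => (hJ hi).1, hJc, insert x R, fun i hi j hj hij => ?_⟩
      rw [← hR i hi j hj hij]
      have h1 := (hJ hi).2
      have h2 := (hJ hj).2
      ext t
      simp only [Finset.mem_inter, Finset.mem_insert, Finset.mem_erase]
      grind
    · push Not at hx
      obtain ⟨J, hJ⟩ := zorn_subset {J : Set ι | J ⊆ I ∧ J.Pairwise fun i j => A i ∩ A j = ∅} (by
        intro c hc hch
        refine ⟨⋃₀ c, ⟨sUnion_subset fun s hs => (hc hs).1, ?_⟩, fun s hs => subset_sUnion_of_mem hs⟩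
        exact (pairwise_sUnion hch.directedOn).2 fun s hs => (hc hs).2)
      refine ⟨J, hJ.prop.1, ?_, ∅, fun i hi j hj hij => hJ.prop.2 hi hj hij⟩
      by_contra hJc
      push Not at hJc
      have hsub : I ⊆ J ∪ ⋃ x ∈ ⋃ j ∈ J, (A j : Set α), {i | i ∈ I ∧ x ∈ A i} := by
        intro i hi
        by_contra hni
        simp only [mem_union, mem_iUnion, mem_ofPred_eq, not_or, not_exists, Finset.mem_coe] at hni
        have : insert i J ⊆ J := hJ.le_of_ge ⟨insert_subset hi hJ.prop.1, by
          refine hJ.prop.2.insert fun j hj _ => ?_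
          have : A i ∩ A j = ∅ := by
            ext x
            simp only [Finset.mem_inter, Finset.notMem_empty, iff_false]
            rintro ⟨h1, h2⟩
            exact hni.2 x ⟨j, hj, h2⟩ ⟨hi, h1⟩
          exact ⟨this, by rw [Finset.inter_comm]; exact this⟩⟩ (subset_insert i J)
        exact hni.1 (this (mem_insert i J))
      have hU : #(⋃ j ∈ J, (A j : Set α) : Set α) ≤ μ := by
        refine (mk_biUnion_le _ _).trans ?_
        refine (mul_le_mul' hJc (ciSup_le' fun j => ?_)).trans (mul_eq_self hμ).le
        exact ((Cardinal.lt_aleph0_of_finite _).le).trans hμ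
      have hV : #(⋃ x ∈ ⋃ j ∈ J, (A j : Set α), {i | i ∈ I ∧ x ∈ A i} : Set ι) ≤ μ := by
        refine (mk_biUnion_le _ _).trans ?_
        exact (mul_le_mul' hU (ciSup_le' fun x => hx _)).trans (mul_eq_self hμ).le
      exact absurd hI (not_lt.2 ((mk_le_mk_of_subset hsub).trans
        ((mk_union_le _ _).trans ((add_le_add hJc hV).trans (add_eq_self hμ).le))))

theorem delta_aux_s13 {ι α : Type 1} [DecidableEq α] (μ : Cardinal.{1}) (hμ : ℵ₀ ≤ μ)
    (A : ι → Finset α) (hI : μ < #ι) :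
      ∃ J : Set ι, μ < #J ∧ ∃ R : Finset α, ∀ i ∈ J, ∀ j ∈ J, i ≠ j → A i ∩ A j = R := by
  have : ∃ k, μ < #{i | (A i).card = k} := by
    by_contra! hk
    have hsub : (Set.univ : Set ι) ⊆ ⋃ k : ULift.{1} ℕ, {i | (A i).card = k.down} := by
      intro i _
      simp only [mem_iUnion, mem_ofPred_eq]
      exact ⟨⟨_⟩, rfl⟩
    have h1 := (mk_le_mk_of_subset hsub).trans (mk_iUnion_le _)
    rw [mk_univ] at h1
    refine absurd hI (not_lt.2 (h1.trans ((mul_le_mul' ?_ (ciSup_le' fun k => hk _)).trans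
      (mul_eq_self hμ).le)))
    simpa using hμ
  obtain ⟨k, hk⟩ := this
  obtain ⟨J, _, hJ, R, hR⟩ := delta_uniform_aux μ hμ k A _ hk (fun i hi => hi)
  exact ⟨J, hJ, R, hR⟩

/-- given conditions `p_i ∈ 𝒫` (for `i < θ`) and pairwise disjoint
finite `y_i ⊆ s_{p_i}`, there are `i ≠ j` and a common extension `q` of `p_i, p_j`
and a level `n < n_q` with `⟨n,ξ⟩ ∈ a_q` for all `ξ ∈ y_i` and `⟨n,η⟩ ∈ b_q` for
all `η ∈ y_j`. -/
theorem statement13 (θ : Cardinal.{0}) (θseq : Ordinal.{0} → Cardinal.{0})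
    (hκ : ℵ₀ < θ.ord.cof) (hsing : θ.ord.cof < θ)
    (hmono : ∀ α β : Ordinal, α < β → β < θ.ord.cof.ord → θseq α < θseq β)
    (hsup : sSup (θseq '' Set.Iio θ.ord.cof.ord) = θ)
    (h0 : θ.ord.cof < θseq 0)
    (p : Ordinal.{0} → PCond θ)
    (y : Ordinal.{0} → Set Ordinal.{0})
    (hfam : DisjFinFam θ y)
    (hsub : ∀ i < θ.ord, y i ⊆ (p i).s) :
    ∃ i < θ.ord, ∃ j < θ.ord, i ≠ j ∧
      ∃ q : PCond θ, PLe θ q (p i) ∧ PLe θ q (p j) ∧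
        ∃ n < q.n, (∀ ξ ∈ y i, (n, ξ) ∈ q.a) ∧ ∀ η ∈ y j, (n, η) ∈ q.b := by
  classical
  set μ : Cardinal.{1} := Cardinal.aleph 1 with hμdef
  have hμ : ℵ₀ ≤ μ := aleph0_le_aleph 1
  have hι : μ < #(Iio θ.ord) := by
    have h1 : μ = Cardinal.lift.{1, 0} (Cardinal.aleph 1) := by simp [hμdef]
    rw [mk_Iio_ordinal, card_ord, h1]
    rw [lift_lt]
    refine lt_of_le_of_lt ?_ hsing
    rw [← succ_aleph0]
    exact Order.succ_le_of_lt hκ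
  have sf : ∀ i : Iio θ.ord, (p i).s.Finite := fun i => (p i).s_fin
  have Zf : ∀ i : Iio θ.ord, (p i).Z.Finite := fun i => (p i).Z_fin
  let A : Iio θ.ord → Finset (Ordinal.{0} ⊕ Set Ordinal.{0}) := fun i =>
    (sf i).toFinset.disjSum (Zf i).toFinset
  obtain ⟨J, hJ, R, hR⟩ := delta_aux_s13 μ hμ A hι
  have mS : ∀ i ∈ J, ∀ j ∈ J, i ≠ j → ∀ ξ, (ξ ∈ (p i).s ∧ ξ ∈ (p j).s) ↔ Sum.inl ξ ∈ R := by
    intro i hi j hj hij ξ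
    rw [← hR i hi j hj hij]
    simp [A]
  have mZ : ∀ i ∈ J, ∀ j ∈ J, i ≠ j → ∀ z, (z ∈ (p i).Z ∧ z ∈ (p j).Z) ↔ Sum.inr z ∈ R := by
    intro i hi j hj hij ξ
    rw [← hR i hi j hj hij]
    simp [A]
  let S : Set Ordinal.{0} := {ξ | Sum.inl ξ ∈ R}
  let T : Set (Set Ordinal.{0}) := {z | Sum.inr z ∈ R}
  have hS : S.Finite := R.finite_toSet.preimage Sum.inl_injective.injOn
  have hT : T.Finite := R.finite_toSet.preimage Sum.inr_injective.injOn
  -- two elements of J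
  have hJ2 : J.Nontrivial := by
    rw [← not_subsingleton_iff]
    intro hs
    exact absurd hJ (not_lt.2 ((hs.finite.lt_aleph0).le.trans hμ))
  have hTc : ∀ z ∈ T, #z ≤ μ := by
    intro z hz
    obtain ⟨i, hi, j, hj, hij⟩ := hJ2
    exact ((p i).Z_sub z ((mZ i hi j hj hij z).2 hz).1).2
  let B : Set Ordinal.{0} := S ∪ ⋃ z ∈ T, z
  have hB : #B ≤ μ := by
    refine (mk_union_le _ _).trans ((add_le_add (hS.lt_aleph0.le.trans hμ) ?_).trans
      (add_eq_self hμ).le)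
    refine (mk_biUnion_le _ _).trans ?_
    exact (mul_le_mul' (hT.lt_aleph0.le.trans hμ) (ciSup_le' fun x => hTc _ x.2)).trans
      (mul_eq_self hμ).le
  let Bad : Set (Iio θ.ord) := {i | ∃ ξ ∈ y i, ξ ∈ B}
  have hBad : #Bad ≤ μ := by
    refine le_trans ?_ hB
    have hch : ∀ i : Bad, ∃ ξ ∈ y i.1, ξ ∈ B := fun i => i.2
    choose f hf1 hf2 using hch
    refine mk_le_of_injective (f := fun i => (⟨f i, hf2 i⟩ : B)) ?_
    intro i j hij
    have hij' : f i = f j := congrArg Subtype.val hij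
    by_contra hne
    have hd := hfam.2 i.1 i.1.2 j.1 j.1.2 (fun h => hne (Subtype.ext (Subtype.ext h)))
    exact (Set.disjoint_left.1 hd) (hf1 i) (hij' ▸ hf1 j)
  have hG : ¬ (J \ Bad).Countable := by
    intro hc
    have h1 : J ⊆ (J \ Bad) ∪ Bad := by intro i hi; by_cases h : i ∈ Bad <;> simp [h, hi]
    exact absurd hJ (not_lt.2 ((mk_le_mk_of_subset h1).trans ((mk_union_le _ _).trans
      ((add_le_add ((le_aleph0_iff_set_countable.2 hc).trans hμ) hBad).trans (add_eq_self hμ).le))))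
  let code : Iio θ.ord → ℕ × Set (ℕ × Ordinal.{0}) × Set (ℕ × Ordinal.{0}) ×
      Set (ℕ × Set Ordinal.{0}) := fun i =>
    ((p i).n, {x | x ∈ (p i).a ∧ x.2 ∈ S}, {x | x ∈ (p i).b ∧ x.2 ∈ S},
      {x | x.2 ∈ T ∧ x.2 ∈ (p i).Z ∧ x.1 ∈ (p i).c x.2})
  have hSc : (Set.univ ×ˢ S : Set (ℕ × Ordinal.{0})).Countable := countable_univ.prod hS.countable
  have hTcc : (Set.univ ×ˢ T : Set (ℕ × Set Ordinal.{0})).Countable := countable_univ.prod hT.countable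
  have hmaps : MapsTo code (J \ Bad) (Set.univ ×ˢ ({t | Set.Finite t ∧ t ⊆ Set.univ ×ˢ S} ×ˢ
      ({t | Set.Finite t ∧ t ⊆ Set.univ ×ˢ S} ×ˢ {t | Set.Finite t ∧ t ⊆ Set.univ ×ˢ T}))) := by
    intro i _
    refine ⟨trivial, ⟨?_, fun x hx => ⟨trivial, hx.2⟩⟩, ⟨?_, fun x hx => ⟨trivial, hx.2⟩⟩,
      ⟨?_, fun x hx => ⟨trivial, hx.1⟩⟩⟩
    · exact (((finite_Iio _).prod (p i).s_fin).subset (p i).a_sub).subset fun x hx => hx.1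
    · exact (((finite_Iio _).prod (p i).s_fin).subset (p i).b_sub).subset fun x hx => hx.1
    · exact ((finite_Iio (p i).n).prod hT).subset fun x hx =>
        ⟨(p i).c_sub _ hx.2.1 hx.2.2, hx.1⟩
  have hnot : ¬ InjOn code (J \ Bad) := by
    intro hinj
    refine hG (hmaps.countable_of_injOn hinj ?_)
    exact countable_univ.prod ((countable_ofPred_finite_subset hSc).prod
      ((countable_ofPred_finite_subset hSc).prod (countable_ofPred_finite_subset hTcc)))
  simp only [InjOn, not_forall] at hnot
  obtain ⟨i, hi, j, hj, hcode, hij⟩ := hnot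
  simp only [code, Prod.mk.injEq, Set.ext_iff, mem_ofPred_eq] at hcode
  obtain ⟨hn, hca, hcb, hcc⟩ := hcode
  have hSm : ∀ ξ, ξ ∈ (p i).s → ξ ∈ (p j).s → ξ ∈ S := fun ξ h1 h2 =>
    (mS i hi.1 j hj.1 hij ξ).1 ⟨h1, h2⟩
  have hTm : ∀ z, z ∈ (p i).Z → z ∈ (p j).Z → z ∈ T := fun ξ h1 h2 =>
    (mZ i hi.1 j hj.1 hij ξ).1 ⟨h1, h2⟩
  have hiB : ∀ ξ ∈ y i, ξ ∉ B := fun ξ h h' => hi.2 ⟨ξ, h, h'⟩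
  have hjB : ∀ ξ ∈ y j, ξ ∉ B := fun ξ h h' => hj.2 ⟨ξ, h, h'⟩
  refine ⟨i, i.2, j, j.2, fun h => hij (Subtype.ext h), ?_⟩
  refine amalg_aux θ (p i) (p j) (y i) (y j) hn ?_ ?_ ?_ (hsub i i.2) (hsub j j.2) ?_ ?_ ?_
  · intro l ξ h1 h2
    have h3 := hca (l, ξ)
    have h4 := hSm ξ h1 h2
    tauto
  · intro l ξ h1 h2
    have h3 := hcb (l, ξ)
    have h4 := hSm ξ h1 h2
    tauto
  · intro z l h1 h2
    have h3 := hcc (l, z)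
    have h4 := hTm z h1 h2
    tauto
  · intro ξ h h'
    exact hiB ξ h (Or.inl (hSm ξ (hsub i i.2 h) h'))
  · intro ξ h h'
    exact hjB ξ h (Or.inl (hSm ξ h' (hsub j j.2 h)))
  · intro z h1 h2 ξ h h'
    exact hiB ξ h (Or.inr (mem_biUnion (hTm z h1 h2) h'))
end
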